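/- Suppose ν satisfies the Carleman condition and the matrix quadratic module Q^p(G,ν) is Archimedean (there is C > 0 with C − ‖x‖² ∈ Q¹(G,ν)). If F(x) ∈ S[x]^p is positive definite on X = {x : G(x,y) ⪰ 0 ∀ y ∈ Y}, then F ∈ Q^p(G,ν), i.e., F(x) = Σ₀(x) + ∫_Y ⟨Σ(x,y), G(x,y)⟩_p dν(y) for some SOS matrices Σ₀ ∈ S[x]^p and Σ ∈ S[x,y]^{pq}. -/

import Mathlib

open MeasureTheory MvPolynomial Matrix Finset

noncomputable section

/-- A polynomial matrix is an SOS matrix if it factors as `Tᵀ * T`. -/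
def IsSOSMatrix {σ : Type*} {ι : Type*} [Fintype ι]
    (M : Matrix ι ι (MvPolynomial σ ℝ)) : Prop :=
  ∃ (l : ℕ) (T : Matrix (Fin l) ι (MvPolynomial σ ℝ)), M = Tᵀ * T

/-- A polynomial is a sum of squares. -/
def IsSOSPoly {σ : Type*} (f : MvPolynomial σ ℝ) : Prop :=
  ∃ (l : ℕ) (g : Fin l → MvPolynomial σ ℝ), f = ∑ i, (g i) ^ 2

/-- The block-trace bilinear map `⟨A,B⟩_p = Tr_p (Aᵀ (I_p ⊗ B))`. -/
def lram {R : Type*} [CommSemiring R] {ιp ιq : Type*} [Fintype ιq]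
    (A : Matrix (ιp × ιq) (ιp × ιq) R) (B : Matrix ιq ιq R) :
    Matrix ιp ιp R :=
  Matrix.of fun i j => ∑ a : ιq, ∑ c : ιq, A (j, c) (i, a) * B c a

/-- The `x`-part of an exponent in the variables `x ⊕ y`. -/
def xPart {n m : ℕ} (d : (Fin n ⊕ Fin m) →₀ ℕ) : Fin n →₀ ℕ :=
  Finsupp.comapDomain Sum.inl d Sum.inl_injective.injOn

/-- Integrate out the `y`-variables of a polynomial in `(x, y)` against the measure `ν`:
`∫_Y Σ_β H_β(x) y^β dν := Σ_β H_β(x) ∫_Y y^β dν`. -/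
def integY {n m : ℕ} (ν : Measure (Fin m → ℝ))
    (q : MvPolynomial (Fin n ⊕ Fin m) ℝ) : MvPolynomial (Fin n) ℝ :=
  ∑ d ∈ q.support, MvPolynomial.monomial (xPart d)
    (q.coeff d * ∫ y, ∏ j : Fin m, (y j) ^ (d (Sum.inr j)) ∂ν)

/-- All polynomial moments of `ν` are finite. -/
def momentsFinite {m : ℕ} (ν : Measure (Fin m → ℝ)) : Prop :=
  ∀ h : MvPolynomial (Fin m) ℝ, Integrable (fun y => |MvPolynomial.eval y h|) ν

/-- `ν` has support exactly `Y`. -/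
def hasSupport {m : ℕ} (ν : Measure (Fin m → ℝ)) (Y : Set (Fin m → ℝ)) : Prop :=
  ν Yᶜ = 0 ∧ ∀ U : Set (Fin m → ℝ), IsOpen U → (U ∩ Y).Nonempty → 0 < ν U

/-- The multivariate Carleman condition on `ν`. -/
def Carleman {m : ℕ} (ν : Measure (Fin m → ℝ)) : Prop :=
  ∀ j : Fin m, ¬ Summable (fun d : ℕ =>
    (∫ y, (y j) ^ (2 * (d + 1)) ∂ν) ^ (-(1 : ℝ) / (2 * (d + 1))))

/-- Evaluate a polynomial matrix at a point. -/
def evalMat {σ : Type*} {ι : Type*} (x : σ → ℝ)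
    (M : Matrix ι ι (MvPolynomial σ ℝ)) : Matrix ι ι ℝ :=
  M.map (MvPolynomial.eval x)

/-- The spectral (L²-operator) norm of a real matrix. -/
def specNorm {ι : Type*} [Fintype ι] [DecidableEq ι] (A : Matrix ι ι ℝ) : ℝ :=
  ‖(Matrix.toEuclideanLin A).toContinuousLinearMap‖

/-- Degree of a polynomial matrix. -/
def matDeg {ι σ : Type*} [Fintype ι] (M : Matrix ι ι (MvPolynomial σ ℝ)) : ℕ :=
  Finset.univ.sup fun i => Finset.univ.sup fun j => (M i j).totalDegree

/-- Degree in `x` of a polynomial in `(x,y)`. -/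
def degX {n m : ℕ} (q : MvPolynomial (Fin n ⊕ Fin m) ℝ) : ℕ :=
  q.support.sup fun d => ∑ i : Fin n, d (Sum.inl i)

/-- Degree in `y` of a polynomial in `(x,y)`. -/
def degY {n m : ℕ} (q : MvPolynomial (Fin n ⊕ Fin m) ℝ) : ℕ :=
  q.support.sup fun d => ∑ j : Fin m, d (Sum.inr j)

def matDegX {ι : Type*} {n m : ℕ} [Fintype ι]
    (M : Matrix ι ι (MvPolynomial (Fin n ⊕ Fin m) ℝ)) : ℕ :=
  Finset.univ.sup fun i => Finset.univ.sup fun j => degX (M i j)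

def matDegY {ι : Type*} {n m : ℕ} [Fintype ι]
    (M : Matrix ι ι (MvPolynomial (Fin n ⊕ Fin m) ℝ)) : ℕ :=
  Finset.univ.sup fun i => Finset.univ.sup fun j => degY (M i j)

/-- Homogeneity in `x` of a polynomial in `(x,y)`. -/
def IsHomogeneousX {n m : ℕ} (q : MvPolynomial (Fin n ⊕ Fin m) ℝ) (k : ℕ) : Prop :=
  ∀ d ∈ q.support, ∑ i : Fin n, d (Sum.inl i) = k

/-- Positive semidefiniteness of the full (infinite) moment matrix `M(S)`:
every finite principal block submatrix is PSD. -/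
def MomentPSD {n p : ℕ} (S : (Fin n →₀ ℕ) → Matrix (Fin p) (Fin p) ℝ) : Prop :=
  ∀ (N : ℕ) (idx : Fin N → (Fin n →₀ ℕ)),
    (Matrix.of fun a b : Fin N × Fin p => S (idx a.1 + idx b.1) a.2 b.2).PosSemidef

/-- Exponents of degree at most `d` in `n` variables. -/
def Expo (n d : ℕ) := {a : Fin n → Fin (d + 1) // ∑ i, (a i : ℕ) ≤ d}

instance (n d : ℕ) : Fintype (Expo n d) := by unfold Expo; infer_instance
instance (n d : ℕ) : DecidableEq (Expo n d) := by unfold Expo; infer_instance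

def expF {n d : ℕ} (a : Fin n → Fin (d + 1)) : Fin n →₀ ℕ :=
  Finsupp.equivFunOnFinite.symm (fun i => (a i : ℕ))

/-- Truncated moment matrix `M_d(S)`. -/
def momentMat {n p : ℕ} (S : (Fin n →₀ ℕ) → Matrix (Fin p) (Fin p) ℝ) (d : ℕ) :
    Matrix (Expo n d × Fin p) (Expo n d × Fin p) ℝ :=
  Matrix.of fun a b => S (expF a.1.1 + expF b.1.1) a.2 b.2

/-- Truncated localizing matrix `M^ν_{d,k}(G S)`. -/
def locMat {n m p q : ℕ} (ν : Measure (Fin m → ℝ))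
    (G : Matrix (Fin q) (Fin q) (MvPolynomial (Fin n ⊕ Fin m) ℝ))
    (S : (Fin n →₀ ℕ) → Matrix (Fin p) (Fin p) ℝ) (d k : ℕ) :
    Matrix ((Expo n d × Expo m k) × (Fin p × Fin q))
           ((Expo n d × Expo m k) × (Fin p × Fin q)) ℝ :=
  Matrix.of fun r c =>
    ∑ e ∈ (G r.2.2 c.2.2).support,
      (∫ y, ∏ j : Fin m, (y j) ^ (e (Sum.inr j) + (r.1.2.1 j : ℕ) + (c.1.2.1 j : ℕ)) ∂ν) *
      ((G r.2.2 c.2.2).coeff e *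
        S (expF r.1.1.1 + expF c.1.1.1 + xPart e) r.2.1 c.2.1)

/-- The Riesz functional `L_S(H) = Σ_α tr(H_α S_α)`. -/
def RieszL {n p : ℕ} (S : (Fin n →₀ ℕ) → Matrix (Fin p) (Fin p) ℝ)
    (H : Matrix (Fin p) (Fin p) (MvPolynomial (Fin n) ℝ)) : ℝ :=
  ∑ i, ∑ j, ∑ α ∈ (H i j).support, (H i j).coeff α * S α j i

end

/-- Taylor remainder bound for `exp` on the imaginary axis. -/
lemma norm_exp_I_mul_sub_sum_le_of_nonneg (n : ℕ) {x : ℝ} (hx : 0 ≤ x) :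
    ‖Complex.exp (Complex.I * x) - ∑ l ∈ range n, (Complex.I * x) ^ l / (l.factorial : ℂ)‖
      ≤ x ^ n / n.factorial := by
  induction n generalizing x with
  | zero => simp [Complex.norm_exp_I_mul_ofReal]
  | succ n ih =>
    have hmul (t : ℝ) : HasDerivAt (fun t : ℝ => Complex.I * (t : ℂ)) Complex.I t := by
      simpa using (Complex.ofRealCLM.hasDerivAt (x := t)).const_mul Complex.I
    have hf (t : ℝ) : HasDerivAt (fun t : ℝ => Complex.exp (Complex.I * t) -
        ∑ l ∈ range (n + 1), (Complex.I * t) ^ l / (l.factorial : ℂ))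
        (Complex.I * (Complex.exp (Complex.I * t) -
          ∑ l ∈ range n, (Complex.I * t) ^ l / (l.factorial : ℂ))) t := by
      have h1 := (hmul t).cexp
      have h2 : HasDerivAt (fun t : ℝ => ∑ l ∈ range (n + 1),
          (Complex.I * t) ^ l / (l.factorial : ℂ))
          (∑ l ∈ range (n + 1), ((l : ℂ) * (Complex.I * t) ^ (l - 1) * Complex.I)
            / (l.factorial : ℂ)) t := by
        apply HasDerivAt.fun_sum
        intro l _
        exact ((hmul t).pow l).div_const _
      refine (h1.sub h2).congr_deriv ?_
      symm
      rw [sum_range_succ', mul_sub, mul_sum, mul_comm]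
      congr 1
      simp only [Nat.cast_zero, zero_mul, zero_div, add_zero]
      refine sum_congr rfl fun l _ => ?_
      rw [Nat.factorial_succ, Nat.add_sub_cancel]
      have : (l.factorial : ℂ) ≠ 0 := by exact_mod_cast l.factorial_ne_zero
      have : ((l : ℂ) + 1) ≠ 0 := by exact_mod_cast l.succ_ne_zero
      push_cast
      field_simp
    have hB (t : ℝ) : HasDerivAt (fun t : ℝ => t ^ (n + 1) / ((n + 1).factorial : ℝ))
        (t ^ n / (n.factorial : ℝ)) t := by
      refine ((hasDerivAt_pow (n + 1) t).div_const ((n + 1).factorial : ℝ)).congr_deriv ?_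
      rw [Nat.factorial_succ, Nat.add_sub_cancel]
      have : (n.factorial : ℝ) ≠ 0 := by exact_mod_cast n.factorial_ne_zero
      push_cast
      field_simp
    refine image_norm_le_of_norm_deriv_right_le_deriv_boundary (a := 0) (b := x)
      (fun t _ => (hf t).continuousAt.continuousWithinAt)
      (fun t _ => (hf t).hasDerivWithinAt) ?_ hB ?_ (Set.right_mem_Icc.2 hx)
    · rw [sum_range_succ']
      simp
    · intro t ht
      rw [norm_mul, Complex.norm_I, one_mul]
      exact ih ht.1

lemma norm_exp_I_mul_sub_sum_le (n : ℕ) (x : ℝ) :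
    ‖Complex.exp (Complex.I * x) - ∑ l ∈ range n, (Complex.I * x) ^ l / (l.factorial : ℂ)‖
      ≤ |x| ^ n / n.factorial := by
  rcases le_total 0 x with hx | hx
  · rw [abs_of_nonneg hx]
    exact norm_exp_I_mul_sub_sum_le_of_nonneg n hx
  · rw [abs_of_nonpos hx, ← Complex.norm_conj]
    convert norm_exp_I_mul_sub_sum_le_of_nonneg n (neg_nonneg.2 hx) using 2
    simp [← Complex.exp_conj]

/-- Ratios of a positive log-convex sequence control its growth. -/
lemma logConvex_le_mul_pow {M : ℕ → ℝ} (hM : ∀ k, 0 < M k)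
    (hlc : ∀ k, M (k + 1) ^ 2 ≤ M k * M (k + 2)) {N k l : ℕ} (h : k + l ≤ N + 1) :
    M (k + l) ≤ M k * (M (N + 1) / M N) ^ l := by
  have hmono : Monotone fun k => M (k + 1) / M k := by
    refine monotone_nat_of_le_succ fun k => ?_
    rw [div_le_div_iff₀ (hM _) (hM _)]
    nlinarith [hlc k]
  induction l with
  | zero => simp
  | succ l ih =>
    have h1 := ih (by omega)
    have h2 : M (k + l + 1) / M (k + l) ≤ M (N + 1) / M N := hmono (by omega)
    rw [div_le_iff₀ (hM _)] at h2
    have h3 : 0 ≤ M (N + 1) / M N := (div_pos (hM _) (hM _)).le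
    calc M (k + (l + 1)) ≤ M (N + 1) / M N * M (k + l) := h2
      _ ≤ M (N + 1) / M N * (M k * (M (N + 1) / M N) ^ l) := by gcongr
      _ = _ := by ring

/-- One step of the Bang argument for quasi-analyticity. -/
lemma bang_step {A : ℕ → ℝ → ℂ} {M : ℕ → ℝ} (hM : ∀ k, 0 < M k)
    (hlc : ∀ k, M (k + 1) ^ 2 ≤ M k * M (k + 2))
    (hA : ∀ k t, ‖A k t‖ ≤ M k)
    (hT : ∀ k n t h, 0 ≤ h → ‖A k (t + h) - ∑ l ∈ range n, A (k + l) t * (h ^ l / l.factorial : ℝ)‖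
      ≤ M (k + n) * (h ^ n / n.factorial))
    {N : ℕ} {t h : ℝ} (hh : 0 ≤ h) (hhN : h * Real.exp 1 ≤ M N / M (N + 1))
    (hP : ∀ k, ‖A k t‖ ≤ Real.exp ((k : ℝ) - (N + 1)) * M k) (k : ℕ) :
    ‖A k (t + h)‖ ≤ Real.exp ((k : ℝ) - N) * M k := by
  rcases le_or_gt N k with hk | hk
  · refine (hA k _).trans (le_mul_of_one_le_left (hM k).le ?_)
    rw [Real.one_le_exp_iff, sub_nonneg]
    exact_mod_cast hk
  obtain ⟨n, hn⟩ : ∃ n, N + 1 = k + n := ⟨N + 1 - k, by omega⟩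
  set z := Real.exp 1 * h * (M (N + 1) / M N) with hz
  have hz0 : 0 ≤ z := by have := hM N; have := hM (N + 1); positivity
  have hz1 : z ≤ 1 := by
    have := mul_le_mul_of_nonneg_right hhN (div_pos (hM (N + 1)) (hM N)).le
    rw [div_mul_div_cancel₀ (hM _).ne', div_self (hM _).ne'] at this
    rw [hz]
    linarith
  have hterm (l : ℕ) (hl : k + l ≤ N + 1) :
      Real.exp (((k + l : ℕ) : ℝ) - (N + 1)) * M (k + l) * (h ^ l / l.factorial)
      ≤ Real.exp ((k : ℝ) - (N + 1)) * M k * (z ^ l / l.factorial) := by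
    have h1 := logConvex_le_mul_pow hM hlc hl
    have h2 : Real.exp (((k + l : ℕ) : ℝ) - (N + 1))
        = Real.exp ((k : ℝ) - (N + 1)) * Real.exp 1 ^ l := by
      rw [← Real.exp_nat_mul, ← Real.exp_add]
      push_cast
      ring_nf
    rw [h2]
    calc Real.exp ((k : ℝ) - (N + 1)) * Real.exp 1 ^ l * M (k + l) * (h ^ l / l.factorial)
        ≤ Real.exp ((k : ℝ) - (N + 1)) * Real.exp 1 ^ l * (M k * (M (N + 1) / M N) ^ l)
            * (h ^ l / l.factorial) := by gcongr
      _ = _ := by rw [hz, mul_pow, mul_pow]; ring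
  have hsum : ‖∑ l ∈ range n, A (k + l) t * (h ^ l / l.factorial : ℝ)‖
      ≤ ∑ l ∈ range n, Real.exp ((k : ℝ) - (N + 1)) * M k * (z ^ l / l.factorial) := by
    refine (norm_sum_le _ _).trans (sum_le_sum fun l hl => ?_)
    rw [mem_range] at hl
    refine le_trans ?_ (hterm l (by omega))
    rw [norm_mul, Complex.norm_real, Real.norm_of_nonneg (by positivity)]
    gcongr
    exact hP _
  have hlast : M (k + n) * (h ^ n / n.factorial)
      ≤ Real.exp ((k : ℝ) - (N + 1)) * M k * (z ^ n / n.factorial) := by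
    refine le_trans (le_of_eq ?_) (hterm n hn.ge)
    rw [← hn]
    push_cast
    simp
  calc ‖A k (t + h)‖ ≤ ‖A k (t + h) - ∑ l ∈ range n, A (k + l) t * (h ^ l / l.factorial : ℝ)‖
        + ‖∑ l ∈ range n, A (k + l) t * (h ^ l / l.factorial : ℝ)‖ := by
          simpa using norm_add_le (A k (t + h) - ∑ l ∈ range n, A (k + l) t
            * (h ^ l / l.factorial : ℝ)) (∑ l ∈ range n, A (k + l) t * (h ^ l / l.factorial : ℝ))
    _ ≤ ∑ l ∈ range (n + 1), Real.exp ((k : ℝ) - (N + 1)) * M k * (z ^ l / l.factorial) := by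
          rw [sum_range_succ]
          linarith [hT k n t h hh]
    _ = Real.exp ((k : ℝ) - (N + 1)) * M k * ∑ l ∈ range (n + 1), (z ^ l / l.factorial) := by
          rw [mul_sum]
    _ ≤ Real.exp ((k : ℝ) - (N + 1)) * M k * Real.exp 1 := by
          have := hM k
          gcongr
          exact (Real.sum_le_exp_of_nonneg hz0 _).trans (Real.exp_le_exp.2 hz1)
    _ = Real.exp ((k : ℝ) - N) * M k := by
          rw [mul_right_comm, ← Real.exp_add]
          ring_nf

/-- Denjoy–Carleman quasi-analyticity for a family `A k` that behaves like the successive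
derivatives of a function, all of which vanish at `0`. -/
lemma denjoy_carleman {A : ℕ → ℝ → ℂ} {M : ℕ → ℝ} (hM : ∀ k, 0 < M k)
    (hlc : ∀ k, M (k + 1) ^ 2 ≤ M k * M (k + 2))
    (hA : ∀ k t, ‖A k t‖ ≤ M k)
    (hT : ∀ k n t h, 0 ≤ h → ‖A k (t + h) - ∑ l ∈ range n, A (k + l) t * (h ^ l / l.factorial : ℝ)‖
      ≤ M (k + n) * (h ^ n / n.factorial))
    (hdiv : ¬ Summable fun k => M k / M (k + 1))
    (h0 : ∀ k, A k 0 = 0) {t : ℝ} (ht : 0 ≤ t) (k : ℕ) : A k t = 0 := by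
  set a : ℕ → ℝ := fun k => M k / M (k + 1) with ha
  have ha0 (k) : 0 < a k := div_pos (hM _) (hM _)
  have he := Real.exp_pos 1
  have key (N d : ℕ) (h : ℝ) (hh : 0 ≤ h)
      (hle : h * Real.exp 1 ≤ ∑ j ∈ range d, a (N + j)) :
      ∀ k, ‖A k h‖ ≤ Real.exp ((k : ℝ) - N) * M k := by
    induction d generalizing N h with
    | zero =>
      have : h = 0 := by
        simp at hle
        nlinarith
      intro k
      rw [this, h0, norm_zero]
      have := hM k
      positivity
    | succ d ih =>
      rw [sum_range_succ'] at hle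
      set h' := max (h - a N / Real.exp 1) 0 with hh'
      have h1 : h' * Real.exp 1 ≤ ∑ j ∈ range d, a (N + 1 + j) := by
        rw [hh', max_mul_of_nonneg _ _ he.le, zero_mul, sub_mul, div_mul_cancel₀ _ he.ne']
        refine max_le ?_ (sum_nonneg fun j _ => (ha0 _).le)
        have : ∀ j, N + 1 + j = N + (j + 1) := fun j => by omega
        simp only [this]
        simp only [add_zero] at hle
        linarith
      have h2 := ih (N + 1) h' (le_max_right _ _) h1
      have h3 := bang_step hM hlc hA hT (N := N) (t := h') (h := h - h')
        (sub_nonneg.2 (max_le (by have := div_pos (ha0 N) he; linarith) hh)) (by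
          have : h - a N / Real.exp 1 ≤ h' := le_max_left _ _
          calc (h - h') * Real.exp 1 ≤ (a N / Real.exp 1) * Real.exp 1 := by
                gcongr; linarith
            _ = a N := div_mul_cancel₀ _ he.ne')
        (by simpa using h2)
      simpa using h3
  have hbound (N : ℕ) : ‖A k t‖ ≤ Real.exp ((k : ℝ) - N) * M k := by
    have hdiv' : ¬ Summable fun j => a (N + j) := by
      simpa only [add_comm N] using (summable_nat_add_iff N).not.2 hdiv
    rw [not_summable_iff_tendsto_nat_atTop_of_nonneg fun j => (ha0 _).le] at hdiv'
    obtain ⟨d, hd⟩ := (hdiv'.eventually_ge_atTop (t * Real.exp 1)).exists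
    exact key N d t ht hd k
  have hlim : Filter.Tendsto (fun N : ℕ => Real.exp ((k : ℝ) - N) * M k) Filter.atTop
      (nhds (0 * M k)) := by
    refine Filter.Tendsto.mul_const _ (Real.tendsto_exp_atBot.comp ?_)
    exact Filter.tendsto_atBot_add_const_left _ _
      (Filter.tendsto_neg_atTop_atBot.comp tendsto_natCast_atTop_atTop)
  rw [zero_mul] at hlim
  exact norm_le_zero_iff.1 (ge_of_tendsto' hlim hbound)

/-- The Carleman inequality, in qualitative form. -/
lemma summable_geom_mean {b : ℕ → ℝ} (hb : ∀ k, 0 ≤ b k) (hs : Summable b) :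
    Summable fun k : ℕ => (∏ j ∈ range (k + 1), b j) ^ ((1 : ℝ) / (k + 1)) := by
  have hfac (k : ℕ) : ((k : ℝ) + 1) / Real.exp 1 ≤
      (((k + 1).factorial : ℝ)) ^ ((1 : ℝ) / (k + 1)) := by
    have h1 := Real.pow_div_factorial_le_exp (x := (k : ℝ) + 1) (by positivity) (k + 1)
    have h2 : (((k : ℝ) + 1) / Real.exp 1) ^ (k + 1) ≤ (k + 1).factorial := by
      rw [div_pow, ← Real.exp_nat_mul, div_le_iff₀ (by positivity)]
      rw [div_le_iff₀ (by positivity)] at h1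
      push_cast
      rw [mul_one]
      linarith
    calc ((k : ℝ) + 1) / Real.exp 1
        = ((((k : ℝ) + 1) / Real.exp 1) ^ (k + 1)) ^ ((1 : ℝ) / (k + 1)) := by
          rw [one_div]
          exact_mod_cast (Real.pow_rpow_inv_natCast (by positivity) k.succ_ne_zero).symm
      _ ≤ _ := by gcongr
  set c : ℕ → ℝ := fun k => Real.exp 1 / ((k : ℝ) + 1) ^ 2 *
    ∑ j ∈ range (k + 1), ((j : ℝ) + 1) * b j with hc
  have hle (k : ℕ) : (∏ j ∈ range (k + 1), b j) ^ ((1 : ℝ) / (k + 1)) ≤ c k := by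
    have h1 := Real.geom_mean_le_arith_mean (range (k + 1)) (fun _ => (1 : ℝ))
      (fun j => ((j : ℝ) + 1) * b j) (fun _ _ => zero_le_one) (by simp; positivity)
      (fun j _ => mul_nonneg (by positivity) (hb j))
    simp only [Real.rpow_one, prod_mul_distrib, one_mul, sum_const, card_range, nsmul_eq_mul,
      mul_one] at h1
    have h2 : ∏ j ∈ range (k + 1), ((j : ℝ) + 1) = (k + 1).factorial := by
      rw [← prod_range_add_one_eq_factorial]; push_cast; rfl
    have hp : 0 ≤ ∏ j ∈ range (k + 1), b j := prod_nonneg fun j _ => hb j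
    rw [h2, Real.mul_rpow (by positivity) hp] at h1
    push_cast at h1
    rw [← one_div] at h1
    have h3 := mul_le_mul_of_nonneg_right (hfac k)
      (Real.rpow_nonneg hp ((1 : ℝ) / (k + 1)))
    have h4 := h3.trans h1
    rw [hc]
    have he := Real.exp_pos 1
    have hk : (0 : ℝ) < k + 1 := by positivity
    calc _ = Real.exp 1 / (k + 1) * (((k : ℝ) + 1) / Real.exp 1 *
          (∏ j ∈ range (k + 1), b j) ^ ((1 : ℝ) / (k + 1))) := by field_simp
      _ ≤ Real.exp 1 / (k + 1) * ((∑ j ∈ range (k + 1), ((j : ℝ) + 1) * b j) / (k + 1)) := by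
          gcongr
      _ = _ := by field_simp
  have htail (n j : ℕ) : ∑ k ∈ Ico j n, 1 / ((k : ℝ) + 1) ^ 2 ≤ 2 / ((j : ℝ) + 1) := by
    rcases le_or_gt j n with hjn | hjn
    · have : ∑ k ∈ Ico j n, 1 / ((k : ℝ) + 1) ^ 2 ≤ 2 / ((j : ℝ) + 1) - 2 / ((n : ℝ) + 1) := by
        induction n, hjn using Nat.le_induction with
        | base => simp
        | succ n hjn ih =>
          rw [sum_Ico_succ_top hjn]
          have : 1 / ((n : ℝ) + 1) ^ 2 ≤ 2 / ((n : ℝ) + 1) - 2 / ((n : ℝ) + 1 + 1) := by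
            rw [div_sub_div _ _ (by positivity) (by positivity),
              div_le_div_iff₀ (by positivity) (by positivity)]
            nlinarith [n.cast_nonneg (α := ℝ)]
          push_cast
          linarith
      have : 0 ≤ 2 / ((n : ℝ) + 1) := by positivity
      linarith
    · rw [Ico_eq_empty (by omega), sum_empty]
      positivity
  refine Summable.of_nonneg_of_le (fun k => Real.rpow_nonneg (prod_nonneg fun j _ => hb j) _) hle ?_
  refine summable_of_sum_range_le (c := Real.exp 1 * (2 * ∑' j, b j)) ?_ ?_
  · intro k
    exact mul_nonneg (by positivity) (sum_nonneg fun j _ => mul_nonneg (by positivity) (hb j))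
  · intro n
    calc ∑ k ∈ range n, c k
        = ∑ k ∈ range n, ∑ j ∈ range (k + 1),
            Real.exp 1 / ((k : ℝ) + 1) ^ 2 * (((j : ℝ) + 1) * b j) := by simp only [hc, mul_sum]
      _ = ∑ j ∈ range n, ∑ k ∈ Ico j n,
            Real.exp 1 / ((k : ℝ) + 1) ^ 2 * (((j : ℝ) + 1) * b j) := by
          refine sum_comm' fun k j => ?_
          simp only [mem_range, mem_Ico]
          omega
      _ = ∑ j ∈ range n, Real.exp 1 * (((j : ℝ) + 1) * b j) *
            ∑ k ∈ Ico j n, 1 / ((k : ℝ) + 1) ^ 2 := by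
          refine sum_congr rfl fun j _ => ?_
          rw [mul_sum]
          exact sum_congr rfl fun k _ => by ring
      _ ≤ ∑ j ∈ range n, Real.exp 1 * (((j : ℝ) + 1) * b j) * (2 / ((j : ℝ) + 1)) := by
          refine sum_le_sum fun j _ => ?_
          have := hb j
          gcongr
          exact htail n j
      _ = Real.exp 1 * (2 * ∑ j ∈ range n, b j) := by
          rw [mul_sum, mul_sum]
          refine sum_congr rfl fun j _ => ?_
          field_simp
      _ ≤ _ := by
          gcongr
          exact hs.sum_le_tsum _ fun j _ => hb j

lemma momentsFinite.integrable {m : ℕ} {ν : Measure (Fin m → ℝ)} (h : momentsFinite ν)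
    (f : MvPolynomial (Fin m) ℝ) : Integrable (fun y => eval y f) ν :=
  (integrable_norm_iff f.continuous_eval.aestronglyMeasurable).1 (h f)

lemma momentsFinite.integrable_of_eq {m : ℕ} {ν : Measure (Fin m → ℝ)} (h : momentsFinite ν)
    (f : MvPolynomial (Fin m) ℝ) {φ : (Fin m → ℝ) → ℝ} (hφ : ∀ y, φ y = eval y f) :
    Integrable φ ν :=
  (h.integrable f).congr (Filter.Eventually.of_forall fun y => (hφ y).symm)

lemma momentsFinite.isFiniteMeasure {m : ℕ} {ν : Measure (Fin m → ℝ)} (h : momentsFinite ν) :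
    IsFiniteMeasure ν := by
  have := h.integrable 1
  simp only [map_one] at this
  simpa using (integrable_const_iff.1 this)

lemma momentsFinite.memLp_two {m : ℕ} {ν : Measure (Fin m → ℝ)} (h : momentsFinite ν)
    (f : MvPolynomial (Fin m) ℝ) : MemLp (fun y => eval y f) 2 ν := by
  rw [memLp_two_iff_integrable_sq (h.integrable f).aestronglyMeasurable]
  exact h.integrable_of_eq (f ^ 2) (by simp)

lemma Carleman.not_ae_eq_zero {m : ℕ} {ν : Measure (Fin m → ℝ)} (h : Carleman ν) (j : Fin m) :
    ¬ ∀ᵐ y ∂ν, y j = 0 := by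
  intro h0
  refine h j ?_
  convert summable_zero with d
  rw [integral_eq_zero_of_ae, Real.zero_rpow]
  · have : (0 : ℝ) < 2 * (d + 1) := by positivity
    exact div_ne_zero (by norm_num) this.ne'
  · filter_upwards [h0] with y hy
    simp [hy]

lemma integral_pow_mul_pos {m : ℕ} {ν : Measure (Fin m → ℝ)} (hmom : momentsFinite ν)
    (hcar : Carleman ν) (j : Fin m) (W : MvPolynomial (Fin m) ℝ) (hW : ∀ y, 1 ≤ eval y W)
    (k : ℕ) : 0 < ∫ y, y j ^ (2 * k) * eval y W ∂ν := by
  have hInt : Integrable (fun y => y j ^ (2 * k) * eval y W) ν :=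
      hmom.integrable_of_eq (X j ^ (2 * k) * W) (by simp)
  have hnn (y : Fin m → ℝ) : 0 ≤ y j ^ (2 * k) * eval y W :=
    mul_nonneg (by rw [pow_mul]; positivity) (zero_le_one.trans (hW y))
  refine lt_of_le_of_ne (integral_nonneg hnn) fun h0 => hcar.not_ae_eq_zero j ?_
  filter_upwards [(integral_eq_zero_iff_of_nonneg hnn hInt).1 h0.symm] with y hy
  rcases mul_eq_zero.1 hy with hy | hy
  · exact eq_zero_of_pow_eq_zero hy
  · linarith [hW y]

lemma integral_pow_mul_logConvex {m : ℕ} {ν : Measure (Fin m → ℝ)} (hmom : momentsFinite ν)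
    (j : Fin m) (W : MvPolynomial (Fin m) ℝ) (hW : ∀ y, 1 ≤ eval y W) (k : ℕ) :
    (∫ y, y j ^ (2 * (k + 1)) * eval y W ∂ν) ^ 2 ≤
      (∫ y, y j ^ (2 * k) * eval y W ∂ν) * ∫ y, y j ^ (2 * (k + 2)) * eval y W ∂ν := by
  have hInt (l : ℕ) : Integrable (fun y => y j ^ (2 * l) * eval y W) ν :=
      hmom.integrable_of_eq (X j ^ (2 * l) * W) (by simp)
  have hq (x : ℝ) : 0 ≤ (∫ y, y j ^ (2 * k) * eval y W ∂ν) * (x * x)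
      + (2 * ∫ y, y j ^ (2 * (k + 1)) * eval y W ∂ν) * x
      + ∫ y, y j ^ (2 * (k + 2)) * eval y W ∂ν := by
    have : 0 ≤ ∫ y, (y j ^ k * x + y j ^ (k + 2)) ^ 2 * eval y W ∂ν :=
      integral_nonneg fun y => mul_nonneg (sq_nonneg _) (zero_le_one.trans (hW y))
    convert this using 1
    have h1 := (hInt k).mul_const (x * x)
    have h2 := ((hInt (k + 1)).const_mul 2).mul_const x
    rw [← integral_mul_const, ← integral_const_mul, ← integral_mul_const,
      ← integral_add h1 h2, ← integral_add (h1.fun_add h2) (hInt (k + 2))]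
    exact integral_congr_ae (Filter.Eventually.of_forall fun y => by ring)
  have := discrim_le_zero hq
  rw [discrim] at this
  linarith

lemma Carleman.not_summable_ratio {m : ℕ} {ν : Measure (Fin m → ℝ)} (hmom : momentsFinite ν)
    (hcar : Carleman ν) (j : Fin m) (W : MvPolynomial (Fin m) ℝ) (hW : ∀ y, 1 ≤ eval y W) :
    ¬ Summable fun k => √(∫ y, y j ^ (2 * k) * eval y W ∂ν) /
      √(∫ y, y j ^ (2 * (k + 1)) * eval y W ∂ν) := by
  have := hmom.isFiniteMeasure
  set M : ℕ → ℝ := fun k => √(∫ y, y j ^ (2 * k) * eval y W ∂ν) with hMdef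
  have hM (k) : 0 < M k := Real.sqrt_pos.2 (integral_pow_mul_pos hmom hcar j W hW k)
  intro hs
  change Summable (fun k => M k / M (k + 1)) at hs
  have hg := summable_geom_mean (fun k => (div_pos (hM _) (hM _)).le) hs
  have hprod (k : ℕ) : ∏ i ∈ range k, M i / M (i + 1) = M 0 / M k := by
    induction k with
    | zero => simp [(hM 0).ne']
    | succ k ih => rw [prod_range_succ, ih, div_mul_div_cancel₀ (hM k).ne']
  simp only [hprod] at hg
  set a : ℕ → ℝ := fun d =>
    (∫ y, (y j) ^ (2 * (d + 1)) ∂ν) ^ (-(1 : ℝ) / (2 * (d + 1))) with ha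
  have ha0 (d) : 0 ≤ a d := Real.rpow_nonneg (integral_nonneg fun y => by
    rw [pow_mul]; positivity) _
  set K : ℝ := ∫ y, (2 + eval y W ^ 2) ∂ν + 1 with hK
  have hKint : Integrable (fun y => 2 + eval y W ^ 2) ν :=
      hmom.integrable_of_eq (C 2 + W ^ 2) (by simp)
  have hK1 : 1 ≤ K := by
    have : 0 ≤ ∫ y, (2 + eval y W ^ 2) ∂ν := integral_nonneg fun y => by positivity
    linarith
  set ρ := min 1 (M 0 / √K) with hρ
  have hKs : 0 < √K := Real.sqrt_pos.2 (by linarith)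
  have hρ0 : 0 < ρ := lt_min one_pos (div_pos (hM 0) hKs)
  have hcmp (k d : ℕ) (hkd : 2 * (k + 1) ≤ d + 1) :
      a d ≤ ρ⁻¹ * (M 0 / M (k + 1)) ^ ((1 : ℝ) / (k + 1)) := by
    have hsd : 0 < ∫ y, (y j) ^ (2 * (d + 1)) ∂ν := by
      simpa using integral_pow_mul_pos hmom hcar j 1 (by simp) (d + 1)
    set s := ∫ y, (y j) ^ (2 * (d + 1)) ∂ν with hs
    have had : 0 < a d := Real.rpow_pos_of_pos hsd _
    have hapow : a d ^ (2 * (d + 1)) = s⁻¹ := by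
      rw [ha]
      simp only
      rw [← Real.rpow_natCast, ← Real.rpow_mul hsd.le]
      push_cast
      rw [div_mul_cancel₀ _ (by positivity), Real.rpow_neg_one]
    have hMK : M (k + 1) * a d ^ (k + 1) ≤ √K := by
      rw [hMdef]
      refine Real.le_sqrt_of_sq_le ?_
      rw [mul_pow, Real.sq_sqrt (integral_pow_mul_pos hmom hcar j W hW _).le,
        ← integral_mul_const]
      have hint1 : Integrable (fun y => (y j ^ (2 * (d + 1))) * s⁻¹) ν :=
      hmom.integrable_of_eq (X j ^ (2 * (d + 1)) * C s⁻¹) (by simp)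
      have hint2 : Integrable (fun y => y j ^ (2 * (k + 1)) * eval y W * (a d ^ (k + 1)) ^ 2) ν :=
      hmom.integrable_of_eq (X j ^ (2 * (k + 1)) * W * C ((a d ^ (k + 1)) ^ 2)) (by simp)
      calc ∫ y, y j ^ (2 * (k + 1)) * eval y W * (a d ^ (k + 1)) ^ 2 ∂ν
          ≤ ∫ y, ((2 + eval y W ^ 2) + (y j ^ (2 * (d + 1))) * s⁻¹) ∂ν := by
            refine integral_mono hint2 (hKint.add hint1) fun y => ?_
            simp only
            set t := (y j * a d) ^ 2 with ht
            have ht0 : 0 ≤ t := sq_nonneg _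
            have h1 : y j ^ (2 * (d + 1)) * s⁻¹ = t ^ (d + 1) := by
              rw [← hapow, ← mul_pow, pow_mul]
            have h2 : y j ^ (2 * (k + 1)) * eval y W * (a d ^ (k + 1)) ^ 2
                = t ^ (k + 1) * eval y W := by
              rw [ht]; ring
            rw [h1, h2]
            have h3 : (t ^ (k + 1)) ^ 2 ≤ 1 + t ^ (d + 1) := by
              rw [← pow_mul, mul_comm]
              rcases le_total t 1 with h | h
              · have := pow_le_one₀ (n := 2 * (k + 1)) ht0 h
                have := pow_nonneg ht0 (d + 1)
                linarith
              · have := pow_le_pow_right₀ h hkd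
                linarith
            nlinarith [sq_nonneg (t ^ (k + 1) - eval y W), sq_nonneg (eval y W)]
        _ = K := by
            rw [integral_add hKint hint1, integral_mul_const, mul_inv_cancel₀ hsd.ne']
    have h1 : (ρ * a d) ^ (k + 1) ≤ M 0 / M (k + 1) := by
      rw [le_div_iff₀ (hM _), mul_pow]
      have h2 : ρ ^ (k + 1) ≤ M 0 / √K :=
        (pow_le_of_le_one hρ0.le (min_le_left _ _) k.succ_ne_zero).trans (min_le_right _ _)
      calc ρ ^ (k + 1) * a d ^ (k + 1) * M (k + 1)
          = ρ ^ (k + 1) * (M (k + 1) * a d ^ (k + 1)) := by ring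
        _ ≤ M 0 / √K * √K := by
            have := hM (k + 1)
            have := hM 0
            gcongr
        _ = M 0 := div_mul_cancel₀ _ hKs.ne'
    have h2 : ρ * a d ≤ (M 0 / M (k + 1)) ^ ((1 : ℝ) / (k + 1)) := by
      calc ρ * a d = ((ρ * a d) ^ (k + 1)) ^ ((1 : ℝ) / (k + 1)) := by
            rw [one_div]
            exact_mod_cast (Real.pow_rpow_inv_natCast (by positivity) k.succ_ne_zero).symm
        _ ≤ _ := by gcongr
    rwa [← div_eq_inv_mul, le_div_iff₀' hρ0]
  refine hcar j ((summable_nat_add_iff 1).1 ?_)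
  change Summable fun i => a (i + 1)
  have hg' := hg.mul_left ρ⁻¹
  have he : Summable fun k => a (2 * k + 1) :=
    Summable.of_nonneg_of_le (fun _ => ha0 _) (fun k => hcmp k _ (by omega)) hg'
  have ho : Summable fun k => a (2 * k + 1 + 1) :=
    Summable.of_nonneg_of_le (fun _ => ha0 _) (fun k => hcmp k _ (by omega)) hg'
  exact (he.hasSum.even_add_odd (f := fun i => a (i + 1)) ho.hasSum).summable

lemma integral_abs_pow_mul_le {m : ℕ} {ν : Measure (Fin m → ℝ)} (hmom : momentsFinite ν)
    {φ : (Fin m → ℝ) → ℝ} (hφ : MemLp φ 2 ν) (j : Fin m) (Q : MvPolynomial (Fin m) ℝ) (k : ℕ) :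
    ∫ y, |y j| ^ k * |eval y Q * φ y| ∂ν ≤
      (√(∫ y, φ y ^ 2 ∂ν) + 1) * √(∫ y, y j ^ (2 * k) * eval y (1 + Q ^ 2) ∂ν) := by
  have hf : MemLp (fun y => |y j ^ k * eval y Q|) (ENNReal.ofReal 2) ν := by
    have := (hmom.memLp_two (X j ^ k * Q)).norm
    simpa only [map_mul, map_pow, eval_X, Real.norm_eq_abs, ENNReal.ofReal_ofNat] using this
  have hg : MemLp (fun y => |φ y|) (ENNReal.ofReal 2) ν := by
    simpa only [Real.norm_eq_abs, ENNReal.ofReal_ofNat] using hφ.norm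
  have h := integral_mul_le_Lp_mul_Lq_of_nonneg Real.HolderConjugate.two_two
    (Filter.Eventually.of_forall fun y => abs_nonneg (y j ^ k * eval y Q))
    (Filter.Eventually.of_forall fun y => abs_nonneg (φ y)) hf hg
  simp only [Real.rpow_two, sq_abs, ← Real.sqrt_eq_rpow] at h
  have hmono : ∫ y, (y j ^ k * eval y Q) ^ 2 ∂ν ≤ ∫ y, y j ^ (2 * k) * eval y (1 + Q ^ 2) ∂ν := by
    refine integral_mono (hmom.integrable_of_eq ((X j ^ k * Q) ^ 2) (by simp))
      (hmom.integrable_of_eq (X j ^ (2 * k) * (1 + Q ^ 2)) (by simp)) fun y => ?_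
    have : 0 ≤ (y j ^ k) ^ 2 := sq_nonneg _
    simp only [map_add, map_one, map_pow, mul_pow]
    rw [mul_comm 2 k, pow_mul]
    linarith
  calc ∫ y, |y j| ^ k * |eval y Q * φ y| ∂ν = ∫ y, |y j ^ k * eval y Q| * |φ y| ∂ν := by
        simp only [abs_mul, abs_pow, mul_assoc]
    _ ≤ _ := h
    _ ≤ √(∫ y, y j ^ (2 * k) * eval y (1 + Q ^ 2) ∂ν) * (√(∫ y, φ y ^ 2 ∂ν) + 1) := by
        gcongr
        linarith
    _ = _ := mul_comm _ _

lemma integrable_abs_pow_mul {m : ℕ} {ν : Measure (Fin m → ℝ)} (hmom : momentsFinite ν)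
    {φ : (Fin m → ℝ) → ℝ} (hφ : MemLp φ 2 ν) (j : Fin m) (Q : MvPolynomial (Fin m) ℝ) (k : ℕ) :
    Integrable (fun y => |y j| ^ k * |eval y Q * φ y|) ν := by
  have := ((hmom.memLp_two (X j ^ k * Q)).integrable_mul hφ).abs
  refine this.congr (Filter.Eventually.of_forall fun y => ?_)
  simp [abs_mul, mul_assoc]

/-- Orthogonality to all polynomials propagates along a coordinate direction. -/
lemma integral_exp_mul_eq_zero_step {m : ℕ} {ν : Measure (Fin m → ℝ)} (hmom : momentsFinite ν)
    (hcar : Carleman ν) {φ : (Fin m → ℝ) → ℝ} (hφ : MemLp φ 2 ν) {E : (Fin m → ℝ) → ℂ}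
    (hEc : Continuous E) (hE : ∀ y, ‖E y‖ = 1)
    (j : Fin m) (Q : MvPolynomial (Fin m) ℝ)
    (h0 : ∀ k : ℕ, ∫ y, E y * ((eval y (X j ^ k * Q) * φ y : ℝ) : ℂ) ∂ν = 0)
    {ε : ℝ} (hε : |ε| = 1) {t : ℝ} (ht : 0 ≤ t) :
    ∫ y, Complex.exp (Complex.I * (t * (ε * y j) : ℝ)) * (E y * ((eval y Q * φ y : ℝ) : ℂ)) ∂ν
      = 0 := by
  set D := √(∫ y, φ y ^ 2 ∂ν) + 1 with hD
  have hD0 : 0 < D := by positivity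
  set W : MvPolynomial (Fin m) ℝ := 1 + Q ^ 2 with hWdef
  have hW (y : Fin m → ℝ) : 1 ≤ eval y W := by
    simp [hWdef, sq_nonneg]
  set M : ℕ → ℝ := fun k => D * √(∫ y, y j ^ (2 * k) * eval y W ∂ν) with hMdef
  set A : ℕ → ℝ → ℂ := fun k τ => ∫ y, (Complex.I * (ε * y j : ℝ)) ^ k *
    Complex.exp (Complex.I * (τ * (ε * y j) : ℝ)) * (E y * ((eval y Q * φ y : ℝ) : ℂ)) ∂ν with hAdef
  have hQφ : AEStronglyMeasurable (fun y => ((eval y Q * φ y : ℝ) : ℂ)) ν :=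
    Complex.continuous_ofReal.comp_aestronglyMeasurable
      (Q.continuous_eval.aestronglyMeasurable.mul hφ.1)
  have hnorm (k : ℕ) (τ : ℝ) (y : Fin m → ℝ) : ‖(Complex.I * (ε * y j : ℝ)) ^ k *
      Complex.exp (Complex.I * (τ * (ε * y j) : ℝ)) * (E y * ((eval y Q * φ y : ℝ) : ℂ))‖
      = |y j| ^ k * |eval y Q * φ y| := by
    rw [norm_mul, norm_mul, norm_mul, norm_pow, norm_mul, Complex.norm_exp_I_mul_ofReal, hE,
      Complex.norm_I, Complex.norm_real, Complex.norm_real, Real.norm_eq_abs, Real.norm_eq_abs,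
      abs_mul, hε]
    simp
  have hInt (k : ℕ) (τ : ℝ) : Integrable (fun y => (Complex.I * (ε * y j : ℝ)) ^ k *
      Complex.exp (Complex.I * (τ * (ε * y j) : ℝ)) * (E y * ((eval y Q * φ y : ℝ) : ℂ))) ν := by
    refine (integrable_abs_pow_mul hmom hφ j Q k).mono' ?_
      (Filter.Eventually.of_forall fun y => (hnorm k τ y).le)
    refine AEStronglyMeasurable.mul ?_ (hEc.aestronglyMeasurable.mul hQφ)
    exact Continuous.aestronglyMeasurable (by fun_prop)
  have hA : ∀ k τ, ‖A k τ‖ ≤ M k := by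
    intro k τ
    refine (norm_integral_le_integral_norm _).trans ?_
    simp only [hnorm]
    exact integral_abs_pow_mul_le hmom hφ j Q k
  have hT : ∀ k n τ h, 0 ≤ h →
      ‖A k (τ + h) - ∑ l ∈ range n, A (k + l) τ * (h ^ l / l.factorial : ℝ)‖
        ≤ M (k + n) * (h ^ n / n.factorial) := by
    intro k n τ h hh
    have hdiff : A k (τ + h) - ∑ l ∈ range n, A (k + l) τ * (h ^ l / l.factorial : ℝ)
        = ∫ y, ((Complex.I * (ε * y j : ℝ)) ^ k *
            Complex.exp (Complex.I * (τ * (ε * y j) : ℝ)) * (E y * ((eval y Q * φ y : ℝ) : ℂ))) *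
          (Complex.exp (Complex.I * (h * (ε * y j) : ℝ)) -
            ∑ l ∈ range n, (Complex.I * (h * (ε * y j) : ℝ)) ^ l / (l.factorial : ℂ)) ∂ν := by
      simp only [hAdef, ← integral_mul_const]
      rw [← integral_finsetSum _ fun l _ => (hInt (k + l) τ).mul_const _,
        ← integral_sub (hInt k (τ + h))
          (integrable_finsetSum _ fun l _ => (hInt (k + l) τ).mul_const _)]
      refine integral_congr_ae (Filter.Eventually.of_forall fun y => ?_)
      simp only
      rw [mul_sub, mul_sum]
      congr 1
      · rw [add_mul, Complex.ofReal_add, mul_add, Complex.exp_add]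
        ring
      · refine sum_congr rfl fun l _ => ?_
        push_cast
        ring
    rw [hdiff]
    refine (norm_integral_le_integral_norm _).trans ?_
    calc _ ≤ ∫ y, |y j| ^ (k + n) * |eval y Q * φ y| * (h ^ n / n.factorial) ∂ν := by
          refine integral_mono_of_nonneg (Filter.Eventually.of_forall fun y => norm_nonneg _)
            ((integrable_abs_pow_mul hmom hφ j Q (k + n)).mul_const _)
            (Filter.Eventually.of_forall fun y => ?_)
          simp only
          rw [norm_mul, hnorm]
          have h1 := norm_exp_I_mul_sub_sum_le n (h * (ε * y j))
          rw [abs_mul, abs_mul, hε, one_mul, abs_of_nonneg hh] at h1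
          calc _ ≤ |y j| ^ k * |eval y Q * φ y| * ((h * |y j|) ^ n / n.factorial) := by gcongr
            _ = _ := by ring
      _ = (∫ y, |y j| ^ (k + n) * |eval y Q * φ y| ∂ν) * (h ^ n / n.factorial) :=
          integral_mul_const _ _
      _ ≤ _ := by
          gcongr
          exact integral_abs_pow_mul_le hmom hφ j Q (k + n)
  have hA0 : ∀ k, A k 0 = 0 := by
    intro k
    have h2 : A k 0 = (Complex.I * ε) ^ k *
        ∫ y, E y * ((eval y (X j ^ k * Q) * φ y : ℝ) : ℂ) ∂ν := by
      rw [← integral_const_mul]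
      refine integral_congr_ae (Filter.Eventually.of_forall fun y => ?_)
      simp
      ring
    rw [h2, h0, mul_zero]
  have hpos (k) := integral_pow_mul_pos hmom hcar j W hW k
  have hM (k) : 0 < M k := mul_pos hD0 (Real.sqrt_pos.2 (hpos k))
  have hlc (k) : M (k + 1) ^ 2 ≤ M k * M (k + 2) := by
    have h1 := Real.sqrt_le_sqrt (integral_pow_mul_logConvex hmom j W hW k)
    rw [Real.sqrt_mul (hpos k).le, Real.sqrt_sq (hpos _).le] at h1
    simp only [hMdef]
    rw [mul_pow, Real.sq_sqrt (hpos _).le]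
    nlinarith [sq_nonneg D]
  have hdiv : ¬ Summable fun k => M k / M (k + 1) := by
    simp only [hMdef, mul_div_mul_left _ _ hD0.ne']
    exact hcar.not_summable_ratio hmom j W hW
  have := denjoy_carleman hM hlc hA hT hdiv hA0 ht 0
  simpa [hAdef] using this

lemma integral_exp_mul_eq_zero {m : ℕ} {ν : Measure (Fin m → ℝ)} (hmom : momentsFinite ν)
    (hcar : Carleman ν) {φ : (Fin m → ℝ) → ℝ} (hφ : MemLp φ 2 ν)
    {s : MvPolynomial (Fin m) ℝ}
    (h0 : ∀ Q : MvPolynomial (Fin m) ℝ, ∫ y, eval y (Q * s) * φ y ∂ν = 0)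
    (t : Fin m → ℝ) (J : Finset (Fin m)) (Q : MvPolynomial (Fin m) ℝ) :
    ∫ y, Complex.exp (Complex.I * (∑ j ∈ J, t j * y j : ℝ)) *
      ((eval y (Q * s) * φ y : ℝ) : ℂ) ∂ν = 0 := by
  induction J using Finset.induction_on generalizing Q with
  | empty =>
    simp only [sum_empty, Complex.ofReal_zero, mul_zero, Complex.exp_zero, one_mul]
    rw [integral_complex_ofReal, h0, Complex.ofReal_zero]
  | insert j J hj ih =>
    obtain ⟨ε, τ, hε, hτ, hετ⟩ : ∃ ε τ : ℝ, |ε| = 1 ∧ 0 ≤ τ ∧ t j = τ * ε := by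
      rcases le_total 0 (t j) with h | h
      · exact ⟨1, t j, by simp, h, by simp⟩
      · exact ⟨-1, -t j, by simp, by simpa using h, by simp⟩
    have := integral_exp_mul_eq_zero_step hmom hcar hφ
      (E := fun y => Complex.exp (Complex.I * (∑ j ∈ J, t j * y j : ℝ)))
      (by fun_prop) (fun y => Complex.norm_exp_I_mul_ofReal _) j (Q * s)
      (fun k => (mul_assoc (X j ^ k) Q s) ▸ ih (X j ^ k * Q)) hε hτ
    rw [← this]
    congr 1
    ext y
    rw [sum_insert hj, Complex.ofReal_add, mul_add, Complex.exp_add, hετ, mul_assoc, mul_assoc]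

/-- An integrable function all of whose Fourier coefficients vanish is zero. -/
lemma ae_eq_zero_of_integral_exp_mul_eq_zero {m : ℕ} {ν : Measure (Fin m → ℝ)}
    {ψ : (Fin m → ℝ) → ℝ} (hψ : Integrable ψ ν)
    (h0 : ∀ t : Fin m → ℝ, ∫ y, Complex.exp (Complex.I * (∑ j, t j * y j : ℝ)) * (ψ y : ℂ) ∂ν = 0) :
    ψ =ᵐ[ν] 0 := by
  have hm1 : AEMeasurable (fun y => ENNReal.ofReal (ψ y)) ν := hψ.aemeasurable.ennreal_ofReal
  have hm2 : AEMeasurable (fun y => ENNReal.ofReal (-ψ y)) ν :=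
    hψ.neg.aemeasurable.ennreal_ofReal
  have hf1 : ∫⁻ y, ENNReal.ofReal (ψ y) ∂ν ≠ ⊤ := hψ.lintegral_lt_top.ne
  have hf2 : ∫⁻ y, ENNReal.ofReal (-ψ y) ∂ν ≠ ⊤ := hψ.neg.lintegral_lt_top.ne
  have := isFiniteMeasure_withDensity hf1
  have := isFiniteMeasure_withDensity hf2
  have heq : ν.withDensity (fun y => ENNReal.ofReal (ψ y))
      = ν.withDensity (fun y => ENNReal.ofReal (-ψ y)) := by
    refine Measure.ext_of_charFunDual ?_
    ext L
    rw [charFunDual_apply, charFunDual_apply,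
      integral_withDensity_eq_integral_toReal_smul₀ hm1 (by simp),
      integral_withDensity_eq_integral_toReal_smul₀ hm2 (by simp), ← sub_eq_zero, ← integral_sub]
    · rw [← h0 fun j => L (Pi.single j 1)]
      refine integral_congr_ae (Filter.Eventually.of_forall fun y => ?_)
      have hL : L y = ∑ j, L (Pi.single j 1) * y j := by
        conv_lhs => rw [pi_eq_sum_univ' y]
        simp [mul_comm]
      simp only
      rw [hL, ← sub_smul, mul_comm _ Complex.I, Complex.real_smul, mul_comm]
      congr 2
      rw [ENNReal.toReal_ofReal', ENNReal.toReal_ofReal']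
      rcases le_total 0 (ψ y) with h | h <;> simp [h]
    all_goals
      refine Integrable.mono' hψ.abs ?_ (Filter.Eventually.of_forall fun y => ?_)
    · exact hm1.ennreal_toReal.aestronglyMeasurable.smul
        (Continuous.aestronglyMeasurable (by fun_prop))
    · rw [norm_smul, Complex.norm_exp_ofReal_mul_I, mul_one, ENNReal.toReal_ofReal',
        Real.norm_eq_abs, abs_of_nonneg (le_max_right _ _)]
      exact max_le (le_abs_self _) (abs_nonneg _)
    · exact hm2.ennreal_toReal.aestronglyMeasurable.smul
        (Continuous.aestronglyMeasurable (by fun_prop))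
    · rw [norm_smul, Complex.norm_exp_ofReal_mul_I, mul_one, ENNReal.toReal_ofReal',
        Real.norm_eq_abs, abs_of_nonneg (le_max_right _ _)]
      exact max_le (neg_le_abs _) (abs_nonneg _)
  rw [withDensity_eq_iff hm1 hm2 hf1] at heq
  filter_upwards [heq] with y hy
  have h1 := congrArg ENNReal.toReal hy
  rw [ENNReal.toReal_ofReal', ENNReal.toReal_ofReal'] at h1
  rcases le_total 0 (ψ y) with h | h <;> simp_all

/-- Under the Carleman condition, polynomial multiples of a positive polynomial are dense in
`L²`. -/
lemma Carleman.exists_integral_sq_lt {m : ℕ} {ν : Measure (Fin m → ℝ)} (hmom : momentsFinite ν)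
    (hcar : Carleman ν) {s : MvPolynomial (Fin m) ℝ} (hs : ∀ y, 0 < eval y s)
    {f : (Fin m → ℝ) → ℝ} (hf : MemLp f 2 ν) {δ : ℝ} (hδ : 0 < δ) :
    ∃ h : MvPolynomial (Fin m) ℝ, ∫ y, (eval y (h * s) - f y) ^ 2 ∂ν < δ := by
  let Φ : MvPolynomial (Fin m) ℝ →ₗ[ℝ] Lp ℝ 2 ν :=
    { toFun := fun h => (hmom.memLp_two (h * s)).toLp _
      map_add' := fun h₁ h₂ => by
        rw [← MemLp.toLp_add]
        exact MemLp.toLp_congr _ _ (Filter.Eventually.of_forall fun y => by simp [add_mul])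
      map_smul' := fun c h => by
        rw [RingHom.id_apply, ← MemLp.toLp_const_smul]
        exact MemLp.toLp_congr _ _ (Filter.Eventually.of_forall fun y => by simp) }
  have hdense : (LinearMap.range Φ).topologicalClosure = ⊤ := by
    rw [Submodule.topologicalClosure_eq_top_iff, Submodule.eq_bot_iff]
    intro φ hφ
    have hφ2 : MemLp φ 2 ν := Lp.memLp φ
    have horth (Q : MvPolynomial (Fin m) ℝ) : ∫ y, eval y (Q * s) * φ y ∂ν = 0 := by
      have h := (Submodule.mem_orthogonal _ _).1 hφ (Φ Q) (LinearMap.mem_range_self _ _)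
      rw [L2.inner_def] at h
      rw [← h]
      refine integral_congr_ae ?_
      filter_upwards [(hmom.memLp_two (Q * s)).coeFn_toLp] with y hy
      change _ = inner ℝ (((hmom.memLp_two (Q * s)).toLp _ : Lp ℝ 2 ν) y) (φ y)
      rw [hy]
      simp [mul_comm]
    have hInt : Integrable (fun y => eval y s * φ y) ν := (hmom.memLp_two s).integrable_mul hφ2
    have h0 := ae_eq_zero_of_integral_exp_mul_eq_zero hInt fun t => by
      simpa only [one_mul] using integral_exp_mul_eq_zero hmom hcar hφ2 horth t univ 1
    rw [Lp.eq_zero_iff_ae_eq_zero]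
    filter_upwards [h0] with y hy
    exact (mul_eq_zero.1 hy).resolve_left (hs y).ne'
  obtain ⟨g, hg, hgd⟩ := Metric.mem_closure_iff.1
    (show hf.toLp f ∈ closure (LinearMap.range Φ : Set (Lp ℝ 2 ν)) by
      rw [← Submodule.topologicalClosure_coe, hdense]; trivial) (√δ) (Real.sqrt_pos.2 hδ)
  obtain ⟨h, rfl⟩ := hg
  refine ⟨h, ?_⟩
  have hInt : ∫ y, (eval y (h * s) - f y) ^ 2 ∂ν = ‖Φ h - hf.toLp f‖ ^ 2 := by
    rw [← real_inner_self_eq_norm_sq, L2.inner_def]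
    refine integral_congr_ae ?_
    filter_upwards [((hmom.memLp_two (h * s)).sub hf).coeFn_toLp] with y hy
    change _ = inner ℝ (((hmom.memLp_two (h * s)).toLp _ - hf.toLp f : Lp ℝ 2 ν) y)
      (((hmom.memLp_two (h * s)).toLp _ - hf.toLp f : Lp ℝ 2 ν) y)
    rw [← MemLp.toLp_sub, hy]
    simp [sq]
  rw [hInt, ← dist_eq_norm, dist_comm]
  exact (Real.lt_sqrt dist_nonneg).1 hgd

/-- Under the Carleman condition, a polynomial that is nonnegative when integrated against every
squared polynomial is nonnegative on the support of the measure. -/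
lemma Carleman.eval_nonneg {m : ℕ} {Y : Set (Fin m → ℝ)} {ν : Measure (Fin m → ℝ)}
    (hsupp : hasSupport ν Y) (hmom : momentsFinite ν) (hcar : Carleman ν)
    (g : MvPolynomial (Fin m) ℝ)
    (hg : ∀ h : MvPolynomial (Fin m) ℝ, 0 ≤ ∫ y, eval y h ^ 2 * eval y g ∂ν)
    {y₀ : Fin m → ℝ} (hy₀ : y₀ ∈ Y) : 0 ≤ eval y₀ g := by
  by_contra! hneg
  have hfin := hmom.isFiniteMeasure
  set U : Set (Fin m → ℝ) := {y | eval y g < 0} with hU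
  have hUo : IsOpen U := isOpen_lt g.continuous_eval continuous_const
  have hUpos : 0 < ν U := hsupp.2 U hUo ⟨y₀, hneg, hy₀⟩
  have hUint : ∫ y in U, eval y g ∂ν < 0 := by
    have h1 : 0 < ∫ y in U, -eval y g ∂ν := by
      rw [setIntegral_pos_iff_support_of_nonneg_ae]
      · refine lt_of_lt_of_le hUpos (measure_mono fun y hy => ⟨?_, hy⟩)
        exact neg_ne_zero.2 (ne_of_lt hy)
      · filter_upwards [ae_restrict_mem hUo.measurableSet] with y hy
        exact neg_nonneg.2 (le_of_lt hy)
      · exact (hmom.integrable g).neg.integrableOn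
    rw [integral_neg] at h1
    linarith
  set s : MvPolynomial (Fin m) ℝ := 1 + g ^ 2 with hs
  have hs1 (y : Fin m → ℝ) : 1 ≤ eval y s := by simp [hs, sq_nonneg]
  set χ : (Fin m → ℝ) → ℝ := U.indicator 1 with hχ
  have hχ01 (y) : χ y = 0 ∨ χ y = 1 := by
    by_cases h : y ∈ U <;> simp [hχ, h]
  have hχm : Measurable χ := measurable_one.indicator hUo.measurableSet
  have hf : MemLp (fun y => χ y * eval y s) 2 ν := by
    refine (hmom.memLp_two s).mono
      (hχm.aestronglyMeasurable.mul s.continuous_eval.aestronglyMeasurable)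
      (Filter.Eventually.of_forall fun y => ?_)
    rcases hχ01 y with h | h <;> simp [h]
  have hχg : ∫ y, χ y * eval y g ∂ν = ∫ y in U, eval y g ∂ν := by
    rw [← integral_indicator hUo.measurableSet]
    congr 1
    ext y
    by_cases h : y ∈ U <;> simp [hχ, h]
  set c := -∫ y in U, eval y g ∂ν with hc
  have hc0 : 0 < c := by linarith
  set S := ∫ y, eval y s ^ 2 ∂ν with hS
  have hS0 : 0 ≤ S := integral_nonneg fun y => sq_nonneg _
  set η := c / (2 * (S + 1)) with hη
  have hη0 : 0 < η := by positivity
  have hηS : η * S < c / 2 := by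
    rw [hη, div_mul_eq_mul_div, div_lt_div_iff₀ (by positivity) (by norm_num)]
    nlinarith
  obtain ⟨h, hh⟩ := hcar.exists_integral_sq_lt hmom (fun y => zero_lt_one.trans_le (hs1 y)) hf
    (δ := c / 2 / (1 + η⁻¹)) (by positivity)
  rw [lt_div_iff₀' (by positivity)] at hh
  have hint1 : Integrable (fun y => (eval y (h * s) - χ y * eval y s) ^ 2) ν :=
    ((hmom.memLp_two (h * s)).sub hf).integrable_sq
  have hint2 : Integrable (fun y => eval y s ^ 2) ν := hmom.integrable_of_eq (s ^ 2) (by simp)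
  have hint3 : Integrable (fun y => eval y h ^ 2 * eval y g) ν :=
    hmom.integrable_of_eq (h ^ 2 * g) (by simp)
  have hint4 : Integrable (fun y => χ y * eval y g) ν := by
    refine (hmom.integrable g).mono
      (hχm.aestronglyMeasurable.mul g.continuous_eval.aestronglyMeasurable)
      (Filter.Eventually.of_forall fun y => ?_)
    rcases hχ01 y with h | h <;> simp [h]
  have hle : ∫ y, eval y h ^ 2 * eval y g ∂ν ≤ ∫ y, (χ y * eval y g +
      ((1 + η⁻¹) * (eval y (h * s) - χ y * eval y s) ^ 2 + η * eval y s ^ 2)) ∂ν := by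
    refine integral_mono hint3
      (hint4.fun_add ((hint1.const_mul _).fun_add (hint2.const_mul _))) fun y => ?_
    simp only [map_mul]
    have hgs : |eval y g| ≤ eval y s ^ 2 := by
      have : eval y s = 1 + eval y g ^ 2 := by simp [hs]
      rw [abs_le, this]
      constructor <;> nlinarith [sq_nonneg (eval y g), sq_nonneg (eval y g + 1),
        sq_nonneg (eval y g - 1)]
    set e := (eval y h - χ y) * eval y s with he
    have hs0 : 0 ≤ eval y s := zero_le_one.trans (hs1 y)
    have h1 : |eval y h + χ y| * eval y s ≤ |e| + 2 * eval y s := by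
      rw [he, abs_mul, abs_of_nonneg hs0]
      have : |eval y h + χ y| ≤ |eval y h - χ y| + 2 := by
        calc |eval y h + χ y| = |(eval y h - χ y) + 2 * χ y| := by ring_nf
          _ ≤ |eval y h - χ y| + |2 * χ y| := abs_add_le _ _
          _ ≤ _ := by rcases hχ01 y with h | h <;> simp [h]
      nlinarith
    have h2 : (eval y h ^ 2 - χ y) * eval y g ≤ |e| * (|e| + 2 * eval y s) := by
      have hfac : eval y h ^ 2 - χ y = (eval y h - χ y) * (eval y h + χ y) := by
        rcases hχ01 y with h | h <;> rw [h] <;> ring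
      calc _ ≤ |(eval y h ^ 2 - χ y) * eval y g| := le_abs_self _
        _ = |eval y h - χ y| * |eval y h + χ y| * |eval y g| := by
            rw [abs_mul, hfac, abs_mul]
        _ ≤ |eval y h - χ y| * |eval y h + χ y| * eval y s ^ 2 := by gcongr
        _ = |e| * (|eval y h + χ y| * eval y s) := by
            rw [he, abs_mul, abs_of_nonneg hs0]; ring
        _ ≤ _ := by gcongr
    have h3 : 2 * (|e| * eval y s) ≤ η⁻¹ * e ^ 2 + η * eval y s ^ 2 := by
      have := mul_nonneg hη0.le (sq_nonneg (η⁻¹ * |e| - eval y s))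
      have hexp : η * (η⁻¹ * |e| - eval y s) ^ 2
          = η⁻¹ * e ^ 2 - 2 * (|e| * eval y s) + η * eval y s ^ 2 := by
        rw [← sq_abs e]
        field_simp
        ring
      linarith
    have h4 : eval y h * eval y s - χ y * eval y s = e := by rw [he]; ring
    rw [h4]
    have h5 : |e| * |e| = e ^ 2 := by rw [← sq, sq_abs]
    nlinarith
  rw [integral_add hint4 ((hint1.const_mul _).fun_add (hint2.const_mul _)),
    integral_add (hint1.const_mul _) (hint2.const_mul _), integral_const_mul, integral_const_mul,
    hχg] at hle
  linarith [hg h]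

/-- A set of polynomial matrices that contains all skew-symmetric matrices, is closed under the
operations of a quadratic module, and is Archimedean. -/
structure IsArchMatrixModule {n p : ℕ} (P : Set (Matrix (Fin p) (Fin p) (MvPolynomial (Fin n) ℝ))) :
    Prop where
  add_mem : ∀ {H K}, H ∈ P → K ∈ P → H + K ∈ P
  smul_mem : ∀ {c : ℝ} {H}, 0 ≤ c → H ∈ P → c • H ∈ P
  sq_smul_mem : ∀ (f : MvPolynomial (Fin n) ℝ) {H}, H ∈ P → f ^ 2 • H ∈ P
  skew_mem : ∀ {H}, Hᵀ = -H → H ∈ P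
  vecMulVec_mem : ∀ u, vecMulVec u u ∈ P
  exists_bound : ∃ c : ℝ, 0 ≤ c ∧
    ∀ u, (MvPolynomial.C c - ∑ i, (X i : MvPolynomial (Fin n) ℝ) ^ 2) • vecMulVec u u ∈ P

section ArchModule

variable {n p : ℕ} {P : Set (Matrix (Fin p) (Fin p) (MvPolynomial (Fin n) ℝ))}

lemma smul_vecMulVec_self {R ι : Type*} [CommRing R] (f : R) (u : ι → R) :
    f ^ 2 • vecMulVec u u = vecMulVec (f • u) (f • u) := by
  ext i j
  simp [vecMulVec_apply]
  ring

lemma one_eq_sum_vecMulVec {R ι : Type*} [CommRing R] [Fintype ι] [DecidableEq ι] :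
    (1 : Matrix ι ι R) = ∑ j, vecMulVec (Pi.single j 1) (Pi.single j 1) := by
  ext a b
  simp [Matrix.sum_apply, vecMulVec_apply, Pi.single_apply, Matrix.one_apply]

namespace IsArchMatrixModule

lemma zero_mem (hP : IsArchMatrixModule P) : 0 ∈ P := hP.skew_mem (by simp)

lemma sum_mem (hP : IsArchMatrixModule P) {ι : Type*} (s : Finset ι)
    {H : ι → Matrix (Fin p) (Fin p) (MvPolynomial (Fin n) ℝ)} (h : ∀ i ∈ s, H i ∈ P) :
    ∑ i ∈ s, H i ∈ P :=
  Finset.sum_induction _ (· ∈ P) (fun _ _ => hP.add_mem) hP.zero_mem h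

lemma C_smul_mem (hP : IsArchMatrixModule P) {c : ℝ} (hc : 0 ≤ c)
    {H : Matrix (Fin p) (Fin p) (MvPolynomial (Fin n) ℝ)} (hH : H ∈ P) :
    (MvPolynomial.C c : MvPolynomial (Fin n) ℝ) • H ∈ P := by
  have h : (MvPolynomial.C c : MvPolynomial (Fin n) ℝ) • H = c • H := by
    ext1 i j
    simp [MvPolynomial.smul_eq_C_mul]
  rw [h]
  exact hP.smul_mem hc hH

lemma sub_mul_sq_smul_mem (hP : IsArchMatrixModule P) {f g : MvPolynomial (Fin n) ℝ} {a b : ℝ}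
    (ha : 0 ≤ a) (hf : ∀ u, (MvPolynomial.C a - f ^ 2) • vecMulVec u u ∈ P)
    (hg : ∀ u, (MvPolynomial.C b - g ^ 2) • vecMulVec u u ∈ P)
    (u : Fin p → MvPolynomial (Fin n) ℝ) :
    (MvPolynomial.C (a * b) - (f * g) ^ 2) • vecMulVec u u ∈ P := by
  have h : MvPolynomial.C (a * b) - (f * g) ^ 2
      = (MvPolynomial.C a - f ^ 2) * g ^ 2 + MvPolynomial.C a * (MvPolynomial.C b - g ^ 2) := by
    rw [C_mul]
    ring
  rw [h, add_smul, mul_smul, mul_smul, smul_vecMulVec_self]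
  exact hP.add_mem (hf _) (hP.C_smul_mem ha (hg u))

lemma sub_add_sq_smul_mem (hP : IsArchMatrixModule P) {f g : MvPolynomial (Fin n) ℝ} {a b : ℝ}
    (hf : ∀ u, (MvPolynomial.C a - f ^ 2) • vecMulVec u u ∈ P)
    (hg : ∀ u, (MvPolynomial.C b - g ^ 2) • vecMulVec u u ∈ P)
    (u : Fin p → MvPolynomial (Fin n) ℝ) :
    (MvPolynomial.C (2 * (a + b)) - (f + g) ^ 2) • vecMulVec u u ∈ P := by
  have h : MvPolynomial.C (2 * (a + b)) - (f + g) ^ 2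
      = MvPolynomial.C 2 * ((MvPolynomial.C a - f ^ 2) + (MvPolynomial.C b - g ^ 2))
        + (f - g) ^ 2 := by
    rw [C_mul, C_add, show (MvPolynomial.C 2 : MvPolynomial (Fin n) ℝ) = 2 from map_ofNat _ 2]
    ring
  rw [h, add_smul, mul_smul, add_smul, smul_vecMulVec_self]
  exact hP.add_mem (hP.C_smul_mem zero_le_two (hP.add_mem (hf u) (hg u))) (hP.vecMulVec_mem _)

lemma sub_X_sq_smul_mem (hP : IsArchMatrixModule P) {c : ℝ}
    (h : ∀ u, (MvPolynomial.C c - ∑ i, (X i : MvPolynomial (Fin n) ℝ) ^ 2) • vecMulVec u u ∈ P)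
    (i : Fin n) (u : Fin p → MvPolynomial (Fin n) ℝ) :
    (MvPolynomial.C c - (X i : MvPolynomial (Fin n) ℝ) ^ 2) • vecMulVec u u ∈ P := by
  have e : MvPolynomial.C c - (X i : MvPolynomial (Fin n) ℝ) ^ 2
      = (MvPolynomial.C c - ∑ i, X i ^ 2) + ∑ j ∈ univ.erase i, X j ^ 2 := by
    rw [← add_sum_erase univ (fun j => (X j : MvPolynomial (Fin n) ℝ) ^ 2) (mem_univ i)]
    ring
  rw [e, add_smul, sum_smul]
  refine hP.add_mem (h u) (hP.sum_mem _ fun j _ => ?_)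
  rw [smul_vecMulVec_self]
  exact hP.vecMulVec_mem _

lemma exists_sub_sq_smul_mem (hP : IsArchMatrixModule P) (f : MvPolynomial (Fin n) ℝ) :
    ∃ c : ℝ, 0 ≤ c ∧ ∀ u, (MvPolynomial.C c - f ^ 2) • vecMulVec u u ∈ P := by
  induction f using MvPolynomial.induction_on with
  | C a =>
    refine ⟨a ^ 2, sq_nonneg a, fun u => ?_⟩
    simpa using hP.zero_mem
  | add f g hf hg =>
    obtain ⟨a, ha, hf⟩ := hf
    obtain ⟨b, hb, hg⟩ := hg
    exact ⟨2 * (a + b), by positivity, hP.sub_add_sq_smul_mem hf hg⟩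
  | mul_X f i hf =>
    obtain ⟨a, ha, hf⟩ := hf
    obtain ⟨c, hc, h⟩ := hP.exists_bound
    exact ⟨a * c, mul_nonneg ha hc, hP.sub_mul_sq_smul_mem ha hf (hP.sub_X_sq_smul_mem h i)⟩

/-- Polynomial matrices are generated additively by skew-symmetric matrices and signed rank-one
matrices. -/
lemma _root_.polyMatrix_induction {motive : Matrix (Fin p) (Fin p) (MvPolynomial (Fin n) ℝ) → Prop}
    (hadd : ∀ H K, motive H → motive K → motive (H + K))
    (hskew : ∀ H, Hᵀ = -H → motive H) (hpos : ∀ u, motive (vecMulVec u u))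
    (hneg : ∀ u, motive (-vecMulVec u u))
    (H : Matrix (Fin p) (Fin p) (MvPolynomial (Fin n) ℝ)) : motive H := by
  rw [matrix_eq_sum_single H]
  refine Finset.sum_induction _ motive hadd (hskew 0 (by simp)) fun i _ => ?_
  refine Finset.sum_induction _ motive hadd (hskew 0 (by simp)) fun j _ => ?_
  set g : MvPolynomial (Fin n) ℝ := MvPolynomial.C (1 / 2) * H i j with hg
  have hgg : H i j = g + g := by
    rw [hg, ← add_mul, ← C_add]
    norm_num
  have hdec : Matrix.single i j (H i j) = (Matrix.single i j g - Matrix.single j i g) +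
      (vecMulVec (Pi.single i g + Pi.single j 1) (Pi.single i g + Pi.single j 1) +
      (-vecMulVec (Pi.single i g) (Pi.single i g) +
        -vecMulVec (Pi.single j 1) (Pi.single j 1))) := by
    rw [hgg]
    ext1 a b
    simp only [Matrix.single_apply, Matrix.add_apply, Matrix.sub_apply, Matrix.neg_apply,
      vecMulVec_apply, Pi.add_apply, Pi.single_apply, eq_comm (a := a), eq_comm (a := b)]
    split_ifs <;> first | (exfalso; tauto) | ring
  rw [hdec]
  exact hadd _ _ (hskew _ (by simp)) (hadd _ _ (hpos _) (hadd _ _ (hneg _) (hneg _)))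

lemma vecMulVec_add_self_bound {R ι : Type*} [CommRing R] (u v : ι → R) :
    vecMulVec (u + v) (u + v) + vecMulVec (u - v) (u - v)
      = (vecMulVec u u + vecMulVec v v) + (vecMulVec u u + vecMulVec v v) := by
  ext i j
  simp [vecMulVec_apply]
  ring

lemma exists_smul_one_sub_vecMulVec_mem (hP : IsArchMatrixModule P)
    (u : Fin p → MvPolynomial (Fin n) ℝ) : ∃ c : ℝ, 0 ≤ c ∧ c • 1 - vecMulVec u u ∈ P := by
  have hu : u = ∑ i, Pi.single i (u i) := (Finset.univ_sum_single u).symm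
  rw [hu]
  refine Finset.sum_induction _
    (fun u => ∃ c : ℝ, 0 ≤ c ∧ c • 1 - vecMulVec u u ∈ P) ?_ ?_ ?_
  · rintro u v ⟨a, ha, hu⟩ ⟨b, hb, hv⟩
    refine ⟨2 * (a + b), by positivity, ?_⟩
    convert hP.add_mem (hP.smul_mem zero_le_two (hP.add_mem hu hv)) (hP.vecMulVec_mem (u - v))
      using 1
    have h := vecMulVec_add_self_bound u v
    rw [← eq_sub_iff_add_eq] at h
    rw [h]
    module
  · exact ⟨0, le_rfl, by simpa using hP.zero_mem⟩
  · intro i _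
    obtain ⟨c, hc, h⟩ := hP.exists_sub_sq_smul_mem (u i)
    refine ⟨c, hc, ?_⟩
    convert hP.add_mem (h (Pi.single i 1)) (hP.smul_mem hc (hP.sum_mem (univ.erase i) fun j _ =>
      hP.vecMulVec_mem (Pi.single j 1))) using 1
    have h2 : vecMulVec (Pi.single i (u i)) (Pi.single i (u i))
        = u i ^ 2 • vecMulVec (Pi.single i 1) (Pi.single i (1 : MvPolynomial (Fin n) ℝ)) := by
      rw [smul_vecMulVec_self, ← Pi.single_smul]
      simp
    have h3 : (MvPolynomial.C c : MvPolynomial (Fin n) ℝ) •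
        vecMulVec (Pi.single i 1) (Pi.single i (1 : MvPolynomial (Fin n) ℝ))
        = c • vecMulVec (Pi.single i 1) (Pi.single i 1) := by
      ext a b
      simp [MvPolynomial.smul_eq_C_mul]
    rw [one_eq_sum_vecMulVec, ← add_sum_erase _ _ (mem_univ i), h2, sub_smul, h3]
    module

lemma exists_smul_one_add_mem (hP : IsArchMatrixModule P)
    (H : Matrix (Fin p) (Fin p) (MvPolynomial (Fin n) ℝ)) :
    ∃ c : ℝ, 0 ≤ c ∧ c • 1 + H ∈ P := by
  induction H using polyMatrix_induction with
  | hadd H K hH hK =>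
    obtain ⟨a, ha, hH⟩ := hH
    obtain ⟨b, hb, hK⟩ := hK
    refine ⟨a + b, by positivity, ?_⟩
    convert hP.add_mem hH hK using 1
    module
  | hskew H hH => exact ⟨0, le_rfl, by simpa using hP.skew_mem hH⟩
  | hpos u => exact ⟨0, le_rfl, by simpa using hP.vecMulVec_mem u⟩
  | hneg u => simpa only [sub_eq_add_neg] using hP.exists_smul_one_sub_vecMulVec_mem u

end IsArchMatrixModule
end ArchModule

/-- A linear functional that is nonnegative on `P` and normalized at `e`. -/
structure IsState {E : Type*} [AddCommGroup E] [Module ℝ E] (P : Set E) (e : E) (L : E → ℝ) :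
    Prop where
  map_add : ∀ x y, L (x + y) = L x + L y
  map_smul : ∀ (c : ℝ) x, L (c • x) = c * L x
  nonneg : ∀ x ∈ P, 0 ≤ L x
  map_unit : L e = 1

/-- A convex cone with order unit `e`. -/
structure IsUnitCone {E : Type*} [AddCommGroup E] [Module ℝ E] (P : Set E) (e : E) : Prop where
  add_mem : ∀ {x y}, x ∈ P → y ∈ P → x + y ∈ P
  smul_mem : ∀ {c : ℝ} {x}, 0 ≤ c → x ∈ P → c • x ∈ P
  unit_mem : e ∈ P
  exists_smul_add_mem : ∀ x, ∃ c : ℝ, 0 ≤ c ∧ c • e + x ∈ P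

section UnitCone

variable {E : Type*} [AddCommGroup E] [Module ℝ E] {P : Set E} {e : E} {L : E → ℝ}

namespace IsState

lemma map_zero (hL : IsState P e L) : L 0 = 0 := by
  simpa using hL.map_smul 0 0

lemma map_neg (hL : IsState P e L) (x : E) : L (-x) = -L x := by
  simpa using hL.map_smul (-1) x

lemma map_sub (hL : IsState P e L) (x y : E) : L (x - y) = L x - L y := by
  rw [sub_eq_add_neg, hL.map_add, hL.map_neg, sub_eq_add_neg]

lemma map_sum (hL : IsState P e L) {ι : Type*} (s : Finset ι) (x : ι → E) :
    L (∑ i ∈ s, x i) = ∑ i ∈ s, L (x i) := by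
  classical
  induction s using Finset.induction_on with
  | empty => simp [hL.map_zero]
  | insert a s ha ih => rw [sum_insert ha, sum_insert ha, hL.map_add, ih]

end IsState

namespace IsUnitCone

lemma mem_of_neg_unit_mem (hP : IsUnitCone P e) (h : -e ∈ P) (x : E) : x ∈ P := by
  obtain ⟨c, hc, hx⟩ := hP.exists_smul_add_mem x
  have := hP.add_mem hx (hP.smul_mem hc h)
  rwa [smul_neg, add_comm (c • e), add_neg_cancel_right] at this

/-- A functional separating a point outside the cone. -/
lemma exists_state_nonpos (hP : IsUnitCone P e) {x : E} (hx : x ∉ P) :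
    ∃ L, IsState P e L ∧ L x ≤ 0 := by
  have h0 : (0 : E) ∈ P := by simpa using hP.smul_mem le_rfl hP.unit_mem
  have he : e ≠ 0 := by
    rintro rfl
    exact hx (hP.mem_of_neg_unit_mem (by simpa using h0) x)
  let N : PointedCone ℝ E :=
    { carrier := {z | ∃ y ∈ P, ∃ t : ℝ, 0 ≤ t ∧ z = y - t • x}
      add_mem' := by
        rintro _ _ ⟨y, hy, t, ht, rfl⟩ ⟨y', hy', t', ht', rfl⟩
        exact ⟨y + y', hP.add_mem hy hy', t + t', add_nonneg ht ht', by module⟩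
      zero_mem' := ⟨0, h0, 0, le_rfl, by simp⟩
      smul_mem' := by
        rintro ⟨c, hc⟩ _ ⟨y, hy, t, ht, rfl⟩
        refine ⟨c • y, hP.smul_mem hc hy, c * t, mul_nonneg hc ht, ?_⟩
        change c • (y - t • x) = _
        module }
  have hPN : ∀ y ∈ P, y ∈ N := fun y hy => ⟨y, hy, 0, le_rfl, by simp⟩
  have hN : -e ∉ N := by
    rintro ⟨y, hy, t, ht, h⟩
    rcases ht.eq_or_lt with rfl | ht'
    · exact hx (hP.mem_of_neg_unit_mem (by simpa [h] using hy) x)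
    · have hxe : x = t⁻¹ • (y + e) := by
        have hte : t • x = y + e := by
          rw [← neg_neg e, h]
          abel
        rw [← hte, inv_smul_smul₀ ht'.ne']
      exact hx (hxe ▸ hP.smul_mem (inv_nonneg.mpr ht) (hP.add_mem hy hP.unit_mem))
  obtain ⟨g, hg, hgN⟩ := riesz_extension N (LinearPMap.mkSpanSingleton e (1 : ℝ) he)
    (by
      rintro ⟨z, hz⟩ hzN
      obtain ⟨c, rfl⟩ := Submodule.mem_span_singleton.mp hz
      rw [LinearPMap.mkSpanSingleton'_apply]
      by_contra hc
      have hc' : c < 0 := by simpa using hc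
      refine hN ?_
      have := N.smul_mem (x := c • e) (inv_nonneg.mpr (by linarith : 0 ≤ -c)) hzN
      convert this using 1
      rw [smul_smul, inv_neg, neg_mul, inv_mul_cancel₀ hc'.ne, neg_smul, one_smul])
    (fun y => by
      obtain ⟨c, -, hy⟩ := hP.exists_smul_add_mem y
      exact ⟨⟨c • e, Submodule.mem_span_singleton.mpr ⟨c, rfl⟩⟩, hPN _ hy⟩)
  refine ⟨g, ⟨map_add g, fun c x => by simp, fun y hy => hgN y (hPN y hy), ?_⟩, ?_⟩
  · have := hg ⟨e, Submodule.mem_span_singleton_self e⟩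
    exact this.trans (LinearPMap.mkSpanSingleton'_apply_self _ _ _ _)
  · have := hgN (-x) ⟨0, h0, 1, zero_le_one, by simp⟩
    rw [_root_.map_neg] at this
    linarith

lemma isCompact_setOf_isState (hP : IsUnitCone P e) : IsCompact {L | IsState P e L} := by
  choose c hc hcP using hP.exists_smul_add_mem
  refine (isCompact_univ_pi fun x : E => isCompact_Icc (a := -c x) (b := c (-x))).of_isClosed_subset
    ?_ ?_
  · have : {L | IsState P e L} = {L : E → ℝ | ∀ x y, L (x + y) = L x + L y} ∩
        {L : E → ℝ | ∀ (c : ℝ) x, L (c • x) = c * L x} ∩ {L : E → ℝ | ∀ x ∈ P, 0 ≤ L x} ∩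
        {L : E → ℝ | L e = 1} := by
      ext L
      exact ⟨fun h => ⟨⟨⟨h.1, h.2⟩, h.3⟩, h.4⟩, fun h => ⟨h.1.1.1, h.1.1.2, h.1.2, h.2⟩⟩
    rw [this]
    simp only [Set.ofPred_forall]
    refine ((IsClosed.inter ?_ ?_).inter ?_).inter ?_
    · exact isClosed_iInter fun x => isClosed_iInter fun y =>
        isClosed_eq (by fun_prop) (by fun_prop)
    · exact isClosed_iInter fun x => isClosed_iInter fun y =>
        isClosed_eq (by fun_prop) (by fun_prop)
    · exact isClosed_iInter fun x => isClosed_iInter fun _ =>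
        isClosed_le (by fun_prop) (by fun_prop)
    · exact isClosed_eq (by fun_prop) (by fun_prop)
  · intro L hL x _
    have h1 := hL.nonneg _ (hcP x)
    have h2 := hL.nonneg _ (hcP (-x))
    rw [hL.map_add, hL.map_smul, hL.map_unit] at h1 h2
    rw [hL.map_neg] at h2
    exact ⟨by linarith, by linarith⟩

/-- A point outside the cone is separated by a pure state. -/
lemma exists_extreme_state_nonpos (hP : IsUnitCone P e) {x : E} (hx : x ∉ P) :
    ∃ L ∈ Set.extremePoints ℝ {L | IsState P e L}, L x ≤ 0 := by
  obtain ⟨L₀, hL₀, hL₀x⟩ := hP.exists_state_nonpos hx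
  have hK := hP.isCompact_setOf_isState
  let l : StrongDual ℝ (E → ℝ) := -ContinuousLinearMap.proj x
  have hexp : IsExposed ℝ {L | IsState P e L}
      {L ∈ {L | IsState P e L} | ∀ L' ∈ {L | IsState P e L}, l L' ≤ l L} := fun _ => ⟨l, rfl⟩
  obtain ⟨z, hz, hzmax⟩ := hK.exists_isMaxOn ⟨L₀, hL₀⟩ l.continuous.continuousOn
  obtain ⟨L, hL⟩ := (hexp.isCompact hK).extremePoints_nonempty ⟨z, hz, hzmax⟩
  refine ⟨L, hexp.isExtreme.extremePoints_subset_extremePoints hL, ?_⟩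
  have h := hL.1.2 L₀ hL₀
  have h' : -L₀ x ≤ -L x := h
  linarith

end IsUnitCone

end UnitCone

section ModuleState

variable {A E : Type*} [CommRing A] [Algebra ℝ A] [AddCommGroup E] [Module ℝ E] [Module A E]
  [IsScalarTower ℝ A E] {P : Set E} {e : E} {L : E → ℝ}

namespace IsState

lemma map_algebraMap_smul (hL : IsState P e L) (c : ℝ) (x : E) :
    L (algebraMap ℝ A c • x) = c * L x := by
  rw [algebraMap_smul, hL.map_smul]

lemma sq_map_smul_le (hL : IsState P e L) (hsq : ∀ (f : A), ∀ x ∈ P, f ^ 2 • x ∈ P) (f : A)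
    {x : E} (hx : x ∈ P) : L (f • x) ^ 2 ≤ L (f ^ 2 • x) * L x := by
  have key : ∀ s : ℝ, 0 ≤ L x * (s * s) + 2 * L (f • x) * s + L (f ^ 2 • x) := by
    intro s
    have h := hL.nonneg _ (hsq (f + algebraMap ℝ A s) x hx)
    have e : (f + algebraMap ℝ A s) ^ 2 = f ^ 2 + algebraMap ℝ A (2 * s) * f
        + algebraMap ℝ A (s * s) := by
      simp only [map_mul, map_ofNat]
      ring
    rw [e, add_smul, add_smul, mul_smul, hL.map_add, hL.map_add, hL.map_algebraMap_smul,
      hL.map_algebraMap_smul] at h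
    linarith
  have := discrim_le_zero key
  rw [discrim] at this
  linarith

lemma abs_map_smul_le_of_bounded (hL : IsState P e L) (hsq : ∀ (f : A), ∀ x ∈ P, f ^ 2 • x ∈ P)
    {f : A} {x : E} (hx : x ∈ P) {D : ℝ} (hD : ∀ k : ℕ, |L (f ^ (2 * k) • x)| ≤ D) :
    |L (f • x)| ≤ L x := by
  have ha : 0 ≤ L x := hL.nonneg x hx
  have hCS : ∀ g : A, |L (g • x)| ^ 2 ≤ L x * |L (g ^ 2 • x)| := fun g => by
    rw [sq_abs, mul_comm]
    exact (hL.sq_map_smul_le hsq g hx).trans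
      (mul_le_mul_of_nonneg_right (le_abs_self _) ha)
  rcases ha.eq_or_lt with h0 | ha'
  · have := hCS f
    rw [← h0, zero_mul] at this
    rw [← h0]
    nlinarith [abs_nonneg (L (f • x))]
  by_contra! hlt
  have hiter : ∀ j : ℕ, (|L (f • x)| / L x) ^ 2 ^ j ≤ |L (f ^ 2 ^ j • x)| / L x := by
    intro j
    induction j with
    | zero => simp
    | succ j ih =>
      rw [pow_succ, pow_mul, pow_mul]
      calc ((|L (f • x)| / L x) ^ 2 ^ j) ^ 2 ≤ (|L (f ^ 2 ^ j • x)| / L x) ^ 2 := by gcongr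
        _ ≤ |L ((f ^ 2 ^ j) ^ 2 • x)| / L x := by
          rw [div_pow, div_le_div_iff₀ (by positivity) ha']
          nlinarith [hCS (f ^ 2 ^ j)]
  have hone : 1 < |L (f • x)| / L x := (one_lt_div ha').mpr hlt
  obtain ⟨j, hj⟩ := pow_unbounded_of_one_lt (D / L x) hone
  have h1 := hiter (j + 1)
  have h2 := hD (2 ^ j)
  rw [← pow_succ'] at h2
  have h3 : (|L (f • x)| / L x) ^ j ≤ (|L (f • x)| / L x) ^ 2 ^ (j + 1) :=
    pow_le_pow_right₀ hone.le (Nat.lt_two_pow_self.le.trans (Nat.pow_le_pow_right two_pos (by simp)))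
  have h4 : |L (f ^ 2 ^ (j + 1) • x)| / L x ≤ D / L x := by gcongr
  linarith

lemma of_map_smul_bound (hL : IsState P e L) {f : A} {s : ℝ}
    (hs : ∀ x ∈ P, |s * L (f • x)| ≤ L x / 2) (he : e ∈ P) :
    IsState P e (fun x => (1 + s * L (f • e))⁻¹ * (L x + s * L (f • x))) ∧
      0 < 1 + s * L (f • e) := by
  have hpos : 0 < 1 + s * L (f • e) := by
    have := abs_le.mp (hs e he)
    rw [hL.map_unit] at this
    linarith [this.1]
  refine ⟨⟨fun x y => ?_, fun c x => ?_, fun x hx => ?_, ?_⟩, hpos⟩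
  · rw [smul_add, hL.map_add, hL.map_add]
    ring
  · rw [smul_algebra_smul_comm, hL.map_smul, hL.map_smul]
    ring
  · have := abs_le.mp (hs x hx)
    have h0 := hL.nonneg x hx
    exact mul_nonneg (inv_nonneg.mpr hpos.le) (by linarith [this.1])
  · rw [hL.map_unit, inv_mul_cancel₀ hpos.ne']

/-- Pure states are multiplicative along bounded multipliers. -/
lemma map_smul_eq_mul_of_extreme (hL : L ∈ Set.extremePoints ℝ {L | IsState P e L}) (he : e ∈ P)
    {f : A} {r : ℝ} (hr : 0 < r) (hbound : ∀ x ∈ P, |L (f • x)| ≤ r * L x) (x : E) :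
    L (f • x) = L (f • e) * L x := by
  have hS : IsState P e L := hL.1
  have hs : ∀ x ∈ P, |(2 * r)⁻¹ * L (f • x)| ≤ L x / 2 := fun x hx => by
    rw [abs_mul, abs_of_pos (by positivity), inv_mul_le_iff₀ (by positivity)]
    linarith [hbound x hx]
  have hs' : ∀ x ∈ P, |-(2 * r)⁻¹ * L (f • x)| ≤ L x / 2 := fun x hx => by
    rw [neg_mul, abs_neg]
    exact hs x hx
  obtain ⟨h1, hp1⟩ := hS.of_map_smul_bound hs he
  obtain ⟨h2, hp2⟩ := hS.of_map_smul_bound hs' he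
  have hseg := (mem_extremePoints.mp hL).2 _ h1 _ h2
    ⟨(1 + (2 * r)⁻¹ * L (f • e)) / 2, (1 + -(2 * r)⁻¹ * L (f • e)) / 2, by positivity,
      by positivity, by ring, by
        funext x
        simp only [Pi.add_apply, Pi.smul_apply, smul_eq_mul]
        have e1 := mul_inv_cancel₀ hp1.ne'
        have e2 := mul_inv_cancel₀ hp2.ne'
        linear_combination (L x + (2 * r)⁻¹ * L (f • x)) / 2 * e1
          + (L x + -(2 * r)⁻¹ * L (f • x)) / 2 * e2⟩
  have := congrFun hseg.1 x
  rw [inv_mul_eq_iff_eq_mul₀ hp1.ne'] at this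
  have hr2 : (2 * r)⁻¹ ≠ 0 := by positivity
  refine mul_left_cancel₀ hr2 ?_
  linarith

end IsState

end ModuleState

namespace IsArchMatrixModule

variable {n p : ℕ} {P : Set (Matrix (Fin p) (Fin p) (MvPolynomial (Fin n) ℝ))}
  {L : Matrix (Fin p) (Fin p) (MvPolynomial (Fin n) ℝ) → ℝ}

lemma isUnitCone (hP : IsArchMatrixModule P) : IsUnitCone P 1 where
  add_mem := hP.add_mem
  smul_mem := hP.smul_mem
  unit_mem := by
    rw [one_eq_sum_vecMulVec]
    exact hP.sum_mem _ fun _ _ => hP.vecMulVec_mem _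
  exists_smul_add_mem := hP.exists_smul_one_add_mem

lemma exists_bound_pow_smul (hP : IsArchMatrixModule P) (hL : IsState P 1 L)
    {f : MvPolynomial (Fin n) ℝ} (hf : ∀ u, (1 - f ^ 2) • vecMulVec u u ∈ P)
    (H : Matrix (Fin p) (Fin p) (MvPolynomial (Fin n) ℝ)) :
    ∃ D, ∀ k : ℕ, |L (f ^ (2 * k) • H)| ≤ D := by
  have hpos : ∀ u, ∀ k : ℕ, |L (f ^ (2 * k) • vecMulVec u u)| ≤ L (vecMulVec u u) := by
    intro u k
    have hnn : ∀ k : ℕ, 0 ≤ L (f ^ (2 * k) • vecMulVec u u) := fun k => by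
      rw [mul_comm, pow_mul, smul_vecMulVec_self]
      exact hL.nonneg _ (hP.vecMulVec_mem _)
    rw [abs_of_nonneg (hnn k)]
    induction k with
    | zero => simp
    | succ k ih =>
      refine le_trans ?_ ih
      have h := hL.nonneg _ (hf (f ^ k • u))
      rw [← smul_vecMulVec_self, smul_smul, sub_mul, one_mul, sub_smul, hL.map_sub] at h
      rw [show f ^ (2 * (k + 1)) = f ^ 2 * (f ^ k) ^ 2 by ring,
        show f ^ (2 * k) = (f ^ k) ^ 2 by ring]
      linarith
  induction H using polyMatrix_induction with
  | hadd H K hH hK =>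
    obtain ⟨a, ha⟩ := hH
    obtain ⟨b, hb⟩ := hK
    refine ⟨a + b, fun k => ?_⟩
    rw [smul_add, hL.map_add]
    exact (abs_add_le _ _).trans (add_le_add (ha k) (hb k))
  | hskew H hH =>
    refine ⟨0, fun k => ?_⟩
    have h1 := hL.nonneg (f ^ (2 * k) • H) (hP.skew_mem (by rw [transpose_smul, hH, smul_neg]))
    have h2 := hL.nonneg (-(f ^ (2 * k) • H))
      (hP.skew_mem (by rw [transpose_neg, transpose_smul, hH, smul_neg]))
    rw [hL.map_neg] at h2
    rw [abs_le]
    constructor <;> linarith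
  | hpos u => exact ⟨_, hpos u⟩
  | hneg u => exact ⟨_, fun k => by rw [smul_neg, hL.map_neg, abs_neg]; exact hpos u k⟩

lemma exists_abs_map_smul_le (hP : IsArchMatrixModule P) (hL : IsState P 1 L)
    (f : MvPolynomial (Fin n) ℝ) : ∃ r : ℝ, 0 < r ∧ ∀ H ∈ P, |L (f • H)| ≤ r * L H := by
  obtain ⟨c, hc, hf⟩ := hP.exists_sub_sq_smul_mem f
  have hr : 0 < c + 1 := by linarith
  refine ⟨c + 1, hr, fun H hH => ?_⟩
  have hg : ∀ u, (1 - (MvPolynomial.C (c + 1)⁻¹ * f) ^ 2) • vecMulVec u u ∈ P := by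
    intro u
    have e : 1 - (MvPolynomial.C (c + 1)⁻¹ * f) ^ 2
        = MvPolynomial.C ((c + 1)⁻¹ ^ 2) * (MvPolynomial.C c - f ^ 2)
          + MvPolynomial.C (1 - (c + 1)⁻¹ ^ 2 * c) := by
      simp only [C_sub, C_mul, C_pow, C_1]
      ring
    rw [e, add_smul, mul_smul]
    refine hP.add_mem (hP.C_smul_mem (by positivity) (hf u))
      (hP.C_smul_mem ?_ (hP.vecMulVec_mem u))
    rw [inv_pow, sub_nonneg, inv_mul_le_iff₀ (by positivity)]
    nlinarith
  obtain ⟨D, hD⟩ := hP.exists_bound_pow_smul hL hg H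
  have h := hL.abs_map_smul_le_of_bounded (fun f x hx => hP.sq_smul_mem f hx) hH hD
  rw [mul_smul, ← MvPolynomial.algebraMap_eq, hL.map_algebraMap_smul, abs_mul,
    abs_of_pos (by positivity), inv_mul_le_iff₀ hr] at h
  exact h

/-- A polynomial matrix outside an Archimedean matrix module is separated from it by a state
concentrated at a point. -/
lemma exists_point_state_nonpos (hP : IsArchMatrixModule P)
    {F : Matrix (Fin p) (Fin p) (MvPolynomial (Fin n) ℝ)} (hF : F ∉ P) :
    ∃ (L : Matrix (Fin p) (Fin p) (MvPolynomial (Fin n) ℝ) → ℝ) (a : Fin n → ℝ),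
      IsState P 1 L ∧ L F ≤ 0 ∧ (∀ f H, L (f • H) = eval a f * L H) ∧
      ∀ H, L H = L ((evalMat a H).map MvPolynomial.C) := by
  obtain ⟨L, hLext, hLF⟩ := hP.isUnitCone.exists_extreme_state_nonpos hF
  have hL : IsState P 1 L := hLext.1
  have hmul : ∀ (f : MvPolynomial (Fin n) ℝ) H, L (f • H) = L (f • 1) * L H := fun f H => by
    obtain ⟨r, hr, h⟩ := hP.exists_abs_map_smul_le hL f
    exact IsState.map_smul_eq_mul_of_extreme hLext hP.isUnitCone.unit_mem hr h H
  have heval : ∀ f : MvPolynomial (Fin n) ℝ,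
      L (f • 1) = eval (fun i => L ((X i : MvPolynomial (Fin n) ℝ) • 1)) f := by
    intro f
    induction f using MvPolynomial.induction_on with
    | C c =>
      rw [← MvPolynomial.algebraMap_eq, hL.map_algebraMap_smul, hL.map_unit]
      simp
    | add f g hf hg => rw [add_smul, hL.map_add, hf, hg, map_add]
    | mul_X f i hf => rw [mul_smul, hmul, hf, map_mul, eval_X]
  have hmul' : ∀ (f : MvPolynomial (Fin n) ℝ) H,
      L (f • H) = eval (fun i => L ((X i : MvPolynomial (Fin n) ℝ) • 1)) f * L H :=
    fun f H => by rw [hmul, heval]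
  have hsum : ∀ H : Matrix (Fin p) (Fin p) (MvPolynomial (Fin n) ℝ), L H = ∑ i, ∑ j,
      eval (fun i => L ((X i : MvPolynomial (Fin n) ℝ) • 1)) (H i j)
        * L (Matrix.single i j 1) := by
    intro H
    conv_lhs => rw [matrix_eq_sum_single H]
    rw [hL.map_sum]
    refine sum_congr rfl fun i _ => ?_
    rw [hL.map_sum]
    refine sum_congr rfl fun j _ => ?_
    rw [← hmul', Matrix.smul_single, smul_eq_mul, mul_one]
  refine ⟨L, _, hL, hLF, hmul', fun H => ?_⟩
  rw [hsum H, hsum ((evalMat _ H).map _)]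
  simp [evalMat]

end IsArchMatrixModule

section IntegrateOut

variable {n m : ℕ} {ν : Measure (Fin m → ℝ)}

/-- `integY ν` as a linear map. -/
noncomputable def integYLinear (n : ℕ) {m : ℕ} (ν : Measure (Fin m → ℝ)) :
    MvPolynomial (Fin n ⊕ Fin m) ℝ →ₗ[ℝ] MvPolynomial (Fin n) ℝ :=
  (basisMonomials (Fin n ⊕ Fin m) ℝ).constr ℝ fun d =>
    monomial (xPart d) (∫ y, ∏ j : Fin m, (y j) ^ (d (Sum.inr j)) ∂ν)

lemma integYLinear_monomial (d : (Fin n ⊕ Fin m) →₀ ℕ) (c : ℝ) :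
    integYLinear n ν (monomial d c)
      = monomial (xPart d) (c * ∫ y, ∏ j : Fin m, (y j) ^ (d (Sum.inr j)) ∂ν) := by
  have h : monomial d c = c • basisMonomials (Fin n ⊕ Fin m) ℝ d := by
    simp [smul_monomial]
  rw [h, map_smul, integYLinear, Module.Basis.constr_basis, smul_monomial, smul_eq_mul]

lemma integY_eq_integYLinear (q : MvPolynomial (Fin n ⊕ Fin m) ℝ) :
    integY ν q = integYLinear n ν q := by
  conv_rhs => rw [← support_sum_monomial_coeff q, map_sum]
  exact sum_congr rfl fun d _ => (integYLinear_monomial d _).symm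

lemma integY_add (q r : MvPolynomial (Fin n ⊕ Fin m) ℝ) :
    integY ν (q + r) = integY ν q + integY ν r := by
  simp only [integY_eq_integYLinear, map_add]

lemma integY_monomial (d : (Fin n ⊕ Fin m) →₀ ℕ) (c : ℝ) :
    integY ν (monomial d c)
      = monomial (xPart d) (c * ∫ y, ∏ j : Fin m, (y j) ^ (d (Sum.inr j)) ∂ν) := by
  rw [integY_eq_integYLinear, integYLinear_monomial]

lemma integY_rename_mul (f : MvPolynomial (Fin n) ℝ) (q : MvPolynomial (Fin n ⊕ Fin m) ℝ) :
    integY ν (rename Sum.inl f * q) = f * integY ν q := by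
  induction f using MvPolynomial.induction_on' with
  | add f g hf hg => rw [map_add, add_mul, integY_add, hf, hg, add_mul]
  | monomial d a =>
    induction q using MvPolynomial.induction_on' with
    | add q r hq hr => rw [mul_add, integY_add, hq, hr, integY_add, mul_add]
    | monomial e b =>
      rw [rename_monomial, monomial_mul, integY_monomial, integY_monomial, monomial_mul]
      have h1 : xPart (d.mapDomain Sum.inl + e) = d + xPart e := by
        ext i
        simp [xPart, Finsupp.mapDomain_apply Sum.inl_injective]
      have h2 : ∀ j : Fin m, (d.mapDomain Sum.inl + e : (Fin n ⊕ Fin m) →₀ ℕ) (Sum.inr j)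
          = e (Sum.inr j) := fun j => by
        simp [Finsupp.mapDomain_of_notMem_range]
      simp only [h1, h2, mul_assoc]

/-- Substitute the point `a` for the `x`-variables. -/
noncomputable def substX (a : Fin n → ℝ) (q : MvPolynomial (Fin n ⊕ Fin m) ℝ) :
    MvPolynomial (Fin m) ℝ :=
  bind₁ (Sum.elim (fun i => MvPolynomial.C (a i)) X) q

lemma eval_substX (a : Fin n → ℝ) (y : Fin m → ℝ) (q : MvPolynomial (Fin n ⊕ Fin m) ℝ) :
    eval y (substX a q) = eval (Sum.elim a y) q := by
  rw [substX, eval, eval₂Hom_bind₁]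
  congr 2
  funext i
  cases i <;> simp

lemma momentsFinite.eval_integY (hmom : momentsFinite ν) (a : Fin n → ℝ)
    (q : MvPolynomial (Fin n ⊕ Fin m) ℝ) :
    eval a (integY ν q) = ∫ y, eval (Sum.elim a y) q ∂ν := by
  induction q using MvPolynomial.induction_on' with
  | add q r hq hr =>
    simp only [integY_add, map_add, hq, hr]
    exact (integral_add (hmom.integrable_of_eq _ fun y => (eval_substX a y q).symm)
      (hmom.integrable_of_eq _ fun y => (eval_substX a y r).symm)).symm
  | monomial d c =>
    rw [integY_monomial, eval_monomial]
    simp only [eval_monomial]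
    rw [Finsupp.prod_fintype _ _ (by simp)]
    simp_rw [Finsupp.prod_fintype d _ (fun _ => pow_zero _), Fintype.prod_sum_type]
    simp only [Sum.elim_inl, Sum.elim_inr]
    rw [integral_const_mul, integral_const_mul]
    simp only [xPart, Finsupp.comapDomain_apply]
    ring

end IntegrateOut

section SOSMatrix

variable {σ ι : Type*} [Fintype ι]

lemma IsSOSMatrix.transpose_mul_self {κ : Type*} [Fintype κ]
    (T : Matrix κ ι (MvPolynomial σ ℝ)) : IsSOSMatrix (Tᵀ * T) := by
  refine ⟨Fintype.card κ, T.submatrix (Fintype.equivFin κ).symm id, ?_⟩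
  rw [transpose_submatrix, submatrix_mul_equiv, submatrix_id_id]

lemma IsSOSMatrix.zero : IsSOSMatrix (0 : Matrix ι ι (MvPolynomial σ ℝ)) := ⟨0, 0, by simp⟩

lemma IsSOSMatrix.add {M N : Matrix ι ι (MvPolynomial σ ℝ)} (hM : IsSOSMatrix M)
    (hN : IsSOSMatrix N) : IsSOSMatrix (M + N) := by
  obtain ⟨k, T, rfl⟩ := hM
  obtain ⟨l, U, rfl⟩ := hN
  rw [← fromCols_mul_fromRows, ← transpose_fromRows]
  exact .transpose_mul_self _

lemma IsSOSMatrix.sq_smul {M : Matrix ι ι (MvPolynomial σ ℝ)} (hM : IsSOSMatrix M)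
    (f : MvPolynomial σ ℝ) : IsSOSMatrix (f ^ 2 • M) := by
  obtain ⟨k, T, rfl⟩ := hM
  refine ⟨k, f • T, ?_⟩
  rw [transpose_smul, Matrix.smul_mul, Matrix.mul_smul, smul_smul, sq]

lemma IsSOSMatrix.vecMulVec_self (u : ι → MvPolynomial σ ℝ) : IsSOSMatrix (vecMulVec u u) := by
  rw [vecMulVec_eq Unit, ← transpose_replicateRow]
  exact .transpose_mul_self _

end SOSMatrix

section MatrixQuadraticModule

variable {n m p q : ℕ} {ν : Measure (Fin m → ℝ)}
  {G : Matrix (Fin q) (Fin q) (MvPolynomial (Fin n ⊕ Fin m) ℝ)}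

/-- The matrix quadratic module generated by `G` and `ν`. -/
def matQuadModule (p : ℕ) {n m q : ℕ} (ν : Measure (Fin m → ℝ))
    (G : Matrix (Fin q) (Fin q) (MvPolynomial (Fin n ⊕ Fin m) ℝ)) :
    Set (Matrix (Fin p) (Fin p) (MvPolynomial (Fin n) ℝ)) :=
  {H | ∃ (S0 : Matrix (Fin p) (Fin p) (MvPolynomial (Fin n) ℝ))
    (Sg : Matrix (Fin p × Fin q) (Fin p × Fin q) (MvPolynomial (Fin n ⊕ Fin m) ℝ)),
    IsSOSMatrix S0 ∧ IsSOSMatrix Sg ∧ H = S0 + (lram Sg G).map (integY ν)}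

lemma IsSOSMatrix.mem_matQuadModule {H : Matrix (Fin p) (Fin p) (MvPolynomial (Fin n) ℝ)}
    (hH : IsSOSMatrix H) : H ∈ matQuadModule p ν G := by
  refine ⟨H, 0, hH, .zero, ?_⟩
  ext1 i j
  simp [lram, integY]

lemma add_mem_matQuadModule {H K : Matrix (Fin p) (Fin p) (MvPolynomial (Fin n) ℝ)}
    (hH : H ∈ matQuadModule p ν G) (hK : K ∈ matQuadModule p ν G) :
    H + K ∈ matQuadModule p ν G := by
  obtain ⟨S, T, hS, hT, rfl⟩ := hH
  obtain ⟨S', T', hS', hT', rfl⟩ := hK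
  refine ⟨S + S', T + T', hS.add hS', hT.add hT', ?_⟩
  ext1 i j
  simp only [lram, Matrix.add_apply, Matrix.map_apply, Matrix.of_apply, add_mul,
    sum_add_distrib, integY_add]
  ring

lemma sq_smul_mem_matQuadModule (f : MvPolynomial (Fin n) ℝ)
    {H : Matrix (Fin p) (Fin p) (MvPolynomial (Fin n) ℝ)} (hH : H ∈ matQuadModule p ν G) :
    f ^ 2 • H ∈ matQuadModule p ν G := by
  obtain ⟨S, T, hS, hT, rfl⟩ := hH
  refine ⟨f ^ 2 • S, rename Sum.inl f ^ 2 • T, hS.sq_smul f, hT.sq_smul _, ?_⟩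
  ext1 i j
  simp only [lram, Matrix.add_apply, Matrix.map_apply, Matrix.of_apply, Matrix.smul_apply,
    smul_eq_mul, mul_assoc, ← mul_sum, mul_add]
  rw [← map_pow, integY_rename_mul]

lemma smul_mem_matQuadModule {c : ℝ} (hc : 0 ≤ c)
    {H : Matrix (Fin p) (Fin p) (MvPolynomial (Fin n) ℝ)} (hH : H ∈ matQuadModule p ν G) :
    c • H ∈ matQuadModule p ν G := by
  have h : c • H = (MvPolynomial.C (√c) : MvPolynomial (Fin n) ℝ) ^ 2 • H := by
    rw [← C_pow, Real.sq_sqrt hc]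
    ext1 i j
    simp [MvPolynomial.smul_eq_C_mul]
  rw [h]
  exact sq_smul_mem_matQuadModule _ hH

lemma integY_trace_smul_vecMulVec_mem
    {S : Matrix (Fin q) (Fin q) (MvPolynomial (Fin n ⊕ Fin m) ℝ)} (hS : IsSOSMatrix S)
    (u : Fin p → MvPolynomial (Fin n) ℝ) :
    integY ν (Matrix.trace (Sᵀ * G)) • vecMulVec u u ∈ matQuadModule p ν G := by
  obtain ⟨l, T, rfl⟩ := hS
  let T' : Matrix (Fin l) (Fin p × Fin q) (MvPolynomial (Fin n ⊕ Fin m) ℝ) :=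
    Matrix.of fun k i => rename Sum.inl (u i.1) * T k i.2
  refine ⟨0, T'ᵀ * T', .zero, .transpose_mul_self T', ?_⟩
  ext1 i j
  have h : lram (T'ᵀ * T') G i j
      = rename Sum.inl (u i * u j) * Matrix.trace ((Tᵀ * T)ᵀ * G) := by
    simp only [lram, T', Matrix.of_apply, Matrix.mul_apply, Matrix.transpose_apply, Matrix.trace,
      Matrix.diag_apply, sum_mul, mul_sum, map_mul]
    refine sum_congr rfl fun a _ => sum_congr rfl fun c _ => sum_congr rfl fun k _ => ?_
    ring
  rw [zero_add, Matrix.map_apply, h, integY_rename_mul, Matrix.smul_apply, vecMulVec_apply,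
    smul_eq_mul, mul_comm]

/-- The polynomial matrices whose symmetrization lies in the matrix quadratic module. -/
def symMatQuadModule (p : ℕ) {n m q : ℕ} (ν : Measure (Fin m → ℝ))
    (G : Matrix (Fin q) (Fin q) (MvPolynomial (Fin n ⊕ Fin m) ℝ)) :
    Set (Matrix (Fin p) (Fin p) (MvPolynomial (Fin n) ℝ)) :=
  {H | H + Hᵀ ∈ matQuadModule p ν G}

lemma mem_symMatQuadModule {H : Matrix (Fin p) (Fin p) (MvPolynomial (Fin n) ℝ)}
    (hH : H ∈ matQuadModule p ν G) (hsymm : Hᵀ = H) : H ∈ symMatQuadModule p ν G := by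
  change H + Hᵀ ∈ matQuadModule p ν G
  rw [hsymm]
  exact add_mem_matQuadModule hH hH

lemma transpose_smul_vecMulVec_self {R ι : Type*} [CommRing R] (f : R) (u : ι → R) :
    (f • vecMulVec u u)ᵀ = f • vecMulVec u u := by
  rw [transpose_smul, transpose_vecMulVec]

lemma isArchMatrixModule_symMatQuadModule
    (harch : ∃ C > (0 : ℝ), ∃ σ₀ : MvPolynomial (Fin n) ℝ, IsSOSPoly σ₀ ∧
      ∃ Sg : Matrix (Fin q) (Fin q) (MvPolynomial (Fin n ⊕ Fin m) ℝ), IsSOSMatrix Sg ∧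
        MvPolynomial.C C - ∑ i, (X i : MvPolynomial (Fin n) ℝ) ^ 2 =
          σ₀ + integY ν (Matrix.trace (Sgᵀ * G))) :
    IsArchMatrixModule (symMatQuadModule p ν G) where
  add_mem {H K} hH hK := by
    have := add_mem_matQuadModule hH hK
    rwa [add_add_add_comm, ← transpose_add] at this
  smul_mem {c H} hc hH := by
    have := smul_mem_matQuadModule hc hH
    rwa [smul_add, ← transpose_smul] at this
  sq_smul_mem f H hH := by
    have := sq_smul_mem_matQuadModule f hH
    rwa [smul_add, ← transpose_smul] at this
  skew_mem {H} hH := by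
    change H + Hᵀ ∈ matQuadModule p ν G
    rw [hH, add_neg_cancel]
    exact IsSOSMatrix.zero.mem_matQuadModule
  vecMulVec_mem u :=
    mem_symMatQuadModule (IsSOSMatrix.vecMulVec_self u).mem_matQuadModule (transpose_vecMulVec u u)
  exists_bound := by
    obtain ⟨c, hc, σ₀, ⟨l, g, rfl⟩, S, hS, h⟩ := harch
    refine ⟨c, hc.le, fun u => mem_symMatQuadModule ?_ (transpose_smul_vecMulVec_self _ _)⟩
    rw [h, add_smul, sum_smul]
    refine add_mem_matQuadModule (Finset.sum_induction _ (· ∈ matQuadModule p ν G)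
      (fun _ _ => add_mem_matQuadModule) IsSOSMatrix.zero.mem_matQuadModule fun i _ => ?_)
      (integY_trace_smul_vecMulVec_mem hS u)
    exact ((IsSOSMatrix.vecMulVec_self u).sq_smul (g i)).mem_matQuadModule

end MatrixQuadraticModule

/-- A positive definite matrix and the identity are simultaneously combinations of rank-one
matrices, with positive and unit weights respectively. -/
lemma Matrix.PosDef.exists_eq_sum_vecMulVec {ι : Type*} [Fintype ι] [DecidableEq ι]
    {A : Matrix ι ι ℝ} (hA : A.PosDef) :
    ∃ (w : ι → ℝ) (v : ι → ι → ℝ), (∀ k, 0 < w k) ∧ A = ∑ k, w k • vecMulVec (v k) (v k) ∧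
      1 = ∑ k, vecMulVec (v k) (v k) := by
  let U : Matrix ι ι ℝ := hA.1.eigenvectorUnitary
  refine ⟨hA.1.eigenvalues, fun k i => U i k, hA.eigenvalues_pos, ?_, ?_⟩
  · conv_lhs => rw [hA.1.spectral_theorem, Unitary.conjStarAlgAut_apply]
    ext i j
    rw [Matrix.mul_apply, Matrix.sum_apply]
    refine sum_congr rfl fun k _ => ?_
    simp only [Matrix.mul_diagonal, Matrix.star_apply, Matrix.smul_apply, vecMulVec_apply,
      Function.comp_apply, smul_eq_mul, U, star_trivial, RCLike.ofReal_real_eq_id, id_eq]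
    ring
  · have h : U * star U = 1 := Unitary.mul_star_self_of_mem hA.1.eigenvectorUnitary.2
    rw [← h]
    ext i j
    rw [Matrix.mul_apply, Matrix.sum_apply]
    refine sum_congr rfl fun k _ => ?_
    simp [vecMulVec_apply, Matrix.star_apply]

lemma IsState.map_C_pos {n p : ℕ} {P : Set (Matrix (Fin p) (Fin p) (MvPolynomial (Fin n) ℝ))}
    {L : Matrix (Fin p) (Fin p) (MvPolynomial (Fin n) ℝ) → ℝ} (hP : IsArchMatrixModule P)
    (hL : IsState P 1 L) {A : Matrix (Fin p) (Fin p) ℝ} (hA : A.PosDef) :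
    0 < L (A.map MvPolynomial.C) := by
  obtain ⟨w, v, hw, hAv, h1⟩ := hA.exists_eq_sum_vecMulVec
  let u : Fin p → Fin p → MvPolynomial (Fin n) ℝ := fun k i => MvPolynomial.C (v k i)
  have hA' : A.map MvPolynomial.C = ∑ k, w k • vecMulVec (u k) (u k) := by
    rw [hAv]
    ext1 i j
    simp [Matrix.sum_apply, vecMulVec_apply, u, MvPolynomial.smul_eq_C_mul]
  have h1' : 1 = ∑ k, vecMulVec (u k) (u k) := by
    rw [← Matrix.map_one MvPolynomial.C (C_0 (σ := Fin n) (R := ℝ)) C_1, h1]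
    ext1 i j
    simp [Matrix.sum_apply, vecMulVec_apply, u]
  have hnn : ∀ k, 0 ≤ L (vecMulVec (u k) (u k)) := fun k => hL.nonneg _ (hP.vecMulVec_mem _)
  have hsum : ∑ k, L (vecMulVec (u k) (u k)) = 1 := by
    rw [← hL.map_sum, ← h1', hL.map_unit]
  obtain ⟨k, -, hk⟩ : ∃ k ∈ univ, 0 < L (vecMulVec (u k) (u k)) :=
    Finset.exists_lt_of_sum_lt (by simp [hsum])
  rw [hA', hL.map_sum]
  simp only [hL.map_smul]
  exact sum_pos' (fun k _ => mul_nonneg (hw k).le (hnn k)) ⟨k, mem_univ k, mul_pos (hw k) hk⟩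

/-- A state concentrated at `a` forces `G (a, y)` to be positive semidefinite on `Y`. -/
lemma IsState.posSemidef_evalMat {n m p q : ℕ} {Y : Set (Fin m → ℝ)}
    {ν : Measure (Fin m → ℝ)} (hsupp : hasSupport ν Y) (hmom : momentsFinite ν)
    (hcar : Carleman ν) {G : Matrix (Fin q) (Fin q) (MvPolynomial (Fin n ⊕ Fin m) ℝ)}
    (hGs : G.IsSymm) {L : Matrix (Fin p) (Fin p) (MvPolynomial (Fin n) ℝ) → ℝ} {a : Fin n → ℝ}
    (hL : IsState (symMatQuadModule p ν G) 1 L) (hLa : ∀ f H, L (f • H) = eval a f * L H)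
    {y : Fin m → ℝ} (hy : y ∈ Y) : (evalMat (Sum.elim a y) G).PosSemidef := by
  refine .of_dotProduct_mulVec_nonneg ?_ fun v => ?_
  · rw [IsHermitian, conjTranspose_eq_transpose_of_trivial, evalMat, ← transpose_map, hGs.eq]
  have hquad : ∀ z : Fin m → ℝ, star v ⬝ᵥ (evalMat (Sum.elim a z) G *ᵥ v)
      = eval z (substX a (∑ i, ∑ j, MvPolynomial.C (v i) * G i j * MvPolynomial.C (v j))) := by
    intro z
    rw [eval_substX]
    simp [dotProduct, mulVec, mul_sum, evalMat, mul_assoc]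
  rw [hquad]
  refine hcar.eval_nonneg hsupp hmom _ (fun h => ?_) hy
  let t : Fin q → MvPolynomial (Fin n ⊕ Fin m) ℝ := fun i => rename Sum.inr h * MvPolynomial.C (v i)
  have htr : Matrix.trace ((vecMulVec t t)ᵀ * G) = rename Sum.inr h ^ 2 *
      ∑ i, ∑ j, MvPolynomial.C (v i) * G i j * MvPolynomial.C (v j) := by
    rw [Matrix.trace, sum_comm, mul_sum]
    refine sum_congr rfl fun i _ => ?_
    rw [diag_apply, Matrix.mul_apply, mul_sum]
    refine sum_congr rfl fun j _ => ?_
    simp only [transpose_apply, vecMulVec_apply, t]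
    ring
  have hmem : ∀ u : Fin p → MvPolynomial (Fin n) ℝ,
      0 ≤ eval a (integY ν (Matrix.trace ((vecMulVec t t)ᵀ * G))) * L (vecMulVec u u) := fun u => by
    rw [← hLa]
    exact hL.nonneg _ (mem_symMatQuadModule
      (integY_trace_smul_vecMulVec_mem (IsSOSMatrix.vecMulVec_self t) u)
      (transpose_smul_vecMulVec_self _ _))
  have hone : 0 ≤ eval a (integY ν (Matrix.trace ((vecMulVec t t)ᵀ * G))) := by
    rw [← mul_one (eval a _), ← hL.map_unit, one_eq_sum_vecMulVec, hL.map_sum, mul_sum]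
    exact sum_nonneg fun k _ => hmem _
  rw [hmom.eval_integY, htr] at hone
  convert hone using 2
  funext z
  rw [eval_substX, map_mul, map_pow, eval_rename]
  rfl

/-- the quantified matrix Positivstellensatz (Theorem A) under the
Archimedean and Carleman conditions. -/
theorem quantified_positivstellensatz {n m p q : ℕ}
    (Y : Set (Fin m → ℝ)) (hY : IsClosed Y)
    (ν : Measure (Fin m → ℝ)) (hsupp : hasSupport ν Y) (hmom : momentsFinite ν)
    (hcar : Carleman ν)
    (G : Matrix (Fin q) (Fin q) (MvPolynomial (Fin n ⊕ Fin m) ℝ)) (hGs : G.IsSymm)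
    (harch : ∃ C > (0 : ℝ), ∃ σ₀ : MvPolynomial (Fin n) ℝ, IsSOSPoly σ₀ ∧
      ∃ Sg : Matrix (Fin q) (Fin q) (MvPolynomial (Fin n ⊕ Fin m) ℝ), IsSOSMatrix Sg ∧
        MvPolynomial.C C - ∑ i, (X i : MvPolynomial (Fin n) ℝ) ^ 2 =
          σ₀ + integY ν (Matrix.trace (Sgᵀ * G)))
    (F : Matrix (Fin p) (Fin p) (MvPolynomial (Fin n) ℝ)) (hFs : F.IsSymm)
    (hpd : ∀ x : Fin n → ℝ,
      (∀ y ∈ Y, (evalMat (Sum.elim x y) G).PosSemidef) → (evalMat x F).PosDef) :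
    ∃ (S0 : Matrix (Fin p) (Fin p) (MvPolynomial (Fin n) ℝ))
      (Sg : Matrix (Fin p × Fin q) (Fin p × Fin q) (MvPolynomial (Fin n ⊕ Fin m) ℝ)),
      IsSOSMatrix S0 ∧ IsSOSMatrix Sg ∧
      F = S0 + (lram Sg G).map (integY ν) := by
  by_contra hF
  have hP := isArchMatrixModule_symMatQuadModule (p := p) harch
  have hFP : F ∉ symMatQuadModule p ν G := fun h => hF (by
    have h2 := smul_mem_matQuadModule (c := 1 / 2) (by norm_num) h
    rw [hFs.eq, ← two_smul ℝ F, smul_smul] at h2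
    norm_num at h2
    exact h2)
  obtain ⟨L, a, hL, hLF, hLa, hLeval⟩ := hP.exists_point_state_nonpos hFP
  have hpos := hL.map_C_pos hP
    (hpd a fun y hy => hL.posSemidef_evalMat hsupp hmom hcar hGs hLa hy)
  rw [← hLeval] at hpos
  exact absurd hLF hpos.not_ge
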